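/- arXiv:2604.03987 — 5 statements merged into one kernel-verified Lean document; each statement's English description precedes it below -/
import Mathlib

section
/- Let N points be drawn independently and uniformly at random on the unit sphere S^{n-1} ⊂ ℝⁿ. Then the probability that all N points lie in a common closed hemisphere, i.e., that there exists a unit vector w ∈ ℝⁿ with ⟨x_i, w⟩ ≥ 0 for all i ∈ {1,…,N}, equals 2^{-(N-1)} · Σ_{i=0}^{n-1} C(N-1, i). -/
open MeasureTheory ProbabilityTheory Filter
open scoped RealInnerProductSpace

noncomputable section

/-- `μ` is the uniform (rotation-invariant) probability distribution on the sphere of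
radius `r` centered at the origin of `ℝⁿ`. -/
def IsUniformSphere (n : ℕ) (r : ℝ) (μ : Measure (EuclideanSpace ℝ (Fin n))) : Prop :=
  IsProbabilityMeasure μ ∧
  μ (Metric.sphere (0 : EuclideanSpace ℝ (Fin n)) r)ᶜ = 0 ∧
  ∀ T : EuclideanSpace ℝ (Fin n) ≃ₗᵢ[ℝ] EuclideanSpace ℝ (Fin n), μ.map T = μ

/-!
Flipping the sign of any of the vectors does not change their joint law, so the probability that
they lie in a common half-space is the average, over all `2 ^ N` choices of signs, of the indicator
that the signed vectors do. For vectors in general position that average does not depend on the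
vectors: it is the number of regions of an arrangement of `N` hyperplanes through the origin,
divided by `2 ^ N`. The number of regions is found by deletion and restriction: a region of the
first `N` hyperplanes is cut in two by the last one exactly when it meets it, and the regions it
meets correspond to those of the arrangement induced on it. Closed and open half-spaces differ
only for configurations that are not in general position.
-/

/-- Linear general position: every subfamily of at most `dim V` members is linearly independent.
Almost every configuration of random vectors has this property, and it determines the number of
half-space sign patterns. Since it is stated with `Module.finrank`, it is vacuous if `V` is
infinite-dimensional. -/
def InGeneralPosition (K : Type*) {ι V : Type*} [Semiring K] [AddCommMonoid V] [Module K V]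
    (x : ι → V) : Prop :=
  ∀ s : Finset ι, s.card ≤ Module.finrank K V → LinearIndepOn K x s

/-- The vectors `x i` lie in a common open half-space bounded by a hyperplane through the origin.
Half-spaces are given by linear functionals, so that no inner product is needed. -/
def InOpenHalfSpace (𝕜 : Type*) {ι V : Type*} [CommSemiring 𝕜] [LT 𝕜] [AddCommMonoid V]
    [Module 𝕜 V] (x : ι → V) : Prop :=
  ∃ φ : Module.Dual 𝕜 V, ∀ i, 0 < φ (x i)

open Classical in
/-- The choices of signs `ε` for which the vectors `ε i • x i` lie in a common open half-space.
They correspond to the regions into which the hyperplanes `{φ | φ (x i) = 0}` divide the dual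
space. -/
def halfSpaceSigns (𝕜 : Type*) {ι V : Type*} [CommSemiring 𝕜] [LT 𝕜] [AddCommGroup V]
    [Module 𝕜 V] [Fintype ι] (x : ι → V) : Finset (ι → ℤˣ) :=
  {ε | InOpenHalfSpace 𝕜 (ε • x)}

lemma mem_halfSpaceSigns {𝕜 ι V : Type*} [CommSemiring 𝕜] [LT 𝕜] [AddCommGroup V] [Module 𝕜 V]
    [Fintype ι] {x : ι → V} {ε : ι → ℤˣ} :
    ε ∈ halfSpaceSigns 𝕜 x ↔ InOpenHalfSpace 𝕜 (ε • x) := by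
  simp [halfSpaceSigns]

section GeneralPosition

variable {K ι V : Type*} [Field K] [AddCommGroup V] [Module K V]

lemma InGeneralPosition.comp {κ : Type*} {x : ι → V} (hx : InGeneralPosition K x) {f : κ → ι}
    (hf : Function.Injective f) : InGeneralPosition K (x ∘ f) := by
  intro s hs
  refine LinearIndepOn.comp_of_image ?_ hf.injOn
  simpa using hx (s.map ⟨f, hf⟩) (by simpa using hs)

lemma InGeneralPosition.ne_zero {x : ι → V} (hx : InGeneralPosition K x)
    (hV : 0 < Module.finrank K V) (i : ι) : x i ≠ 0 := by
  simpa using hx {i} (by simpa using Nat.succ_le_of_lt hV)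

lemma finrank_quotient_span_singleton_add_one [FiniteDimensional K V] {y : V} (hy : y ≠ 0) :
    Module.finrank K (V ⧸ K ∙ y) + 1 = Module.finrank K V := by
  rw [← finrank_span_singleton (K := K) hy, Submodule.finrank_quotient_add_finrank]

lemma InGeneralPosition.mkQ_comp_vecTail [FiniteDimensional K V] {N : ℕ} {x : Fin (N + 1) → V}
    (hx : InGeneralPosition K x) (h0 : x 0 ≠ 0) :
    InGeneralPosition K ((K ∙ x 0).mkQ ∘ Matrix.vecTail x) := by
  intro s hs
  have hfinrank := finrank_quotient_span_singleton_add_one (K := K) h0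
  have hinsert := hx (insert 0 (s.map (Fin.succEmb N))) (by
    rw [Finset.card_insert_of_notMem (by simp), Finset.card_map]
    lia)
  rw [Finset.coe_insert, Set.insert_eq,
    ← (LinearIndepOn.singleton (i := (0 : Fin (N + 1))) h0).quotient_iff_union (by simp),
    Set.image_singleton] at hinsert
  refine LinearIndepOn.comp_of_image (f := Fin.succ) (v := (K ∙ x 0).mkQ ∘ x) ?_
    (Fin.succ_injective N).injOn
  simpa using hinsert

lemma InGeneralPosition.card_filter_dual_apply_eq_zero_le [Fintype ι] [DecidableEq K]
    [FiniteDimensional K V] {x : ι → V} (hx : InGeneralPosition K x) {φ : Module.Dual K V}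
    (hφ : φ ≠ 0) : Finset.card {i | φ (x i) = 0} ≤ Module.finrank K V := by
  by_contra! hlt
  obtain ⟨s, hs, hcard⟩ := Finset.exists_subset_card_eq hlt.le
  have hspan : Submodule.span K (Set.range fun i : s => x i) = ⊤ :=
    LinearIndependent.span_eq_top_of_card_eq_finrank' (hx s hcard.le) (by simpa using hcard)
  refine hφ (LinearMap.ext_on_range hspan fun i => ?_)
  simpa using hs i.2

end GeneralPosition

section OpenHalfSpace

variable {𝕜 ι V : Type*} [Field 𝕜] [LinearOrder 𝕜] [AddCommGroup V] [Module 𝕜 V]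

lemma inOpenHalfSpace_vecCons {N : ℕ} {y : V} {x : Fin N → V} :
    InOpenHalfSpace 𝕜 (Matrix.vecCons y x) ↔
      ∃ φ : Module.Dual 𝕜 V, 0 < φ y ∧ ∀ i, 0 < φ (x i) := by
  simp [InOpenHalfSpace, Fin.forall_fin_succ]

variable [IsStrictOrderedRing 𝕜]

lemma exists_forall_add_mul_pos [Finite ι] {a b : ι → 𝕜} (h : ∀ i, 0 < a i ∨ a i = 0 ∧ 0 < b i) :
    ∃ δ, ∀ i, 0 < a i + δ * b i := by
  let _ : TopologicalSpace 𝕜 := Preorder.topology 𝕜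
  have _ : OrderTopology 𝕜 := ⟨rfl⟩
  suffices hδ : ∀ᶠ δ in nhdsWithin 0 (Set.Ioi 0), ∀ i, 0 < a i + δ * b i from hδ.exists
  refine eventually_all.2 fun i => ?_
  rcases h i with ha | ⟨ha, hb⟩
  · have hcont : Continuous fun δ => a i + δ * b i := by fun_prop
    exact nhdsWithin_le_nhds (hcont.continuousAt.eventually (lt_mem_nhds (by simpa using ha)))
  · filter_upwards [self_mem_nhdsWithin] with δ hδ
    simpa [ha] using mul_pos hδ hb

lemma inOpenHalfSpace_of_pos_or_eq_zero [Finite ι] {x : ι → V} {φ ψ : Module.Dual 𝕜 V}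
    (h : ∀ i, 0 < φ (x i) ∨ φ (x i) = 0 ∧ 0 < ψ (x i)) : InOpenHalfSpace 𝕜 x := by
  obtain ⟨δ, hδ⟩ := exists_forall_add_mul_pos h
  exact ⟨φ + δ • ψ, hδ⟩

theorem InGeneralPosition.inOpenHalfSpace_iff [Finite ι] [Nonempty ι] [FiniteDimensional 𝕜 V]
    {x : ι → V} (hx : InGeneralPosition 𝕜 x) :
    InOpenHalfSpace 𝕜 x ↔ ∃ φ : Module.Dual 𝕜 V, φ ≠ 0 ∧ ∀ i, 0 ≤ φ (x i) := by
  constructor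
  · rintro ⟨φ, hφ⟩
    refine ⟨φ, ?_, fun i => (hφ i).le⟩
    rintro rfl
    exact (hφ (Classical.arbitrary ι)).false
  · rintro ⟨φ, hφ0, hφ⟩
    have := Fintype.ofFinite ι
    obtain ⟨ψ, hψ⟩ := Module.exists_dual_forall_apply_eq_one
      (hx _ (hx.card_filter_dual_apply_eq_zero_le hφ0))
    refine inOpenHalfSpace_of_pos_or_eq_zero (φ := φ) (ψ := ψ) fun i => ?_
    rcases (hφ i).eq_or_lt' with h | h
    · exact .inr ⟨h, by simp [hψ i (by simpa using h)]⟩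
    · exact .inl h

lemma inOpenHalfSpace_vecCons_of_apply_eq_zero {N : ℕ} {y : V} {x : Fin N → V} (hy : y ≠ 0)
    {φ : Module.Dual 𝕜 V} (hφy : φ y = 0) (hφ : ∀ i, 0 < φ (x i)) :
    InOpenHalfSpace 𝕜 (Matrix.vecCons y x) := by
  obtain ⟨ψ, hψ⟩ := Module.exists_dual_forall_apply_eq_one
    (LinearIndepOn.singleton (R := 𝕜) (v := id) (i := y) hy)
  have hψy : ψ y = 1 := hψ y rfl
  refine inOpenHalfSpace_of_pos_or_eq_zero (φ := φ) (ψ := ψ) (Fin.cases ?_ ?_)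
  · exact .inr ⟨hφy, by simp [hψy]⟩
  · exact fun i => .inl (hφ i)

lemma inOpenHalfSpace_vecCons_or_neg {N : ℕ} {y : V} {x : Fin N → V} (hy : y ≠ 0) :
    InOpenHalfSpace 𝕜 (Matrix.vecCons y x) ∨ InOpenHalfSpace 𝕜 (Matrix.vecCons (-y) x) ↔
      InOpenHalfSpace 𝕜 x := by
  constructor
  · simp only [inOpenHalfSpace_vecCons]
    rintro (⟨φ, -, hφ⟩ | ⟨φ, -, hφ⟩) <;> exact ⟨φ, hφ⟩
  · rintro ⟨φ, hφ⟩
    rcases lt_trichotomy (φ y) 0 with h | h | h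
    · exact .inr (inOpenHalfSpace_vecCons.2 ⟨φ, by simpa using h, hφ⟩)
    · exact .inl (inOpenHalfSpace_vecCons_of_apply_eq_zero hy h hφ)
    · exact .inl (inOpenHalfSpace_vecCons.2 ⟨φ, h, hφ⟩)

lemma inOpenHalfSpace_vecCons_and_neg {N : ℕ} {y : V} {x : Fin N → V} (hy : y ≠ 0) :
    InOpenHalfSpace 𝕜 (Matrix.vecCons y x) ∧ InOpenHalfSpace 𝕜 (Matrix.vecCons (-y) x) ↔
      InOpenHalfSpace 𝕜 ((𝕜 ∙ y).mkQ ∘ x) := by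
  constructor
  · simp only [inOpenHalfSpace_vecCons]
    rintro ⟨⟨φ, hφy, hφ⟩, ⟨ψ, hψy, hψ⟩⟩
    rw [map_neg] at hψy
    -- The positive combination of `φ` and `ψ` that vanishes at `y`.
    let χ : Module.Dual 𝕜 V := (-ψ y) • φ + φ y • ψ
    have hχy : χ y = 0 := by simp [χ, mul_comm]
    refine ⟨(𝕜 ∙ y).liftQ χ ((Submodule.span_singleton_le_iff_mem y χ.ker).2 hχy), fun i => ?_⟩
    exact add_pos (mul_pos hψy (hφ i)) (mul_pos hφy (hψ i))
  · rintro ⟨φ, hφ⟩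
    let ψ : Module.Dual 𝕜 V := φ ∘ₗ (𝕜 ∙ y).mkQ
    have hψy : ψ y = 0 := by
      simp [ψ, (Submodule.Quotient.mk_eq_zero _).2 (Submodule.mem_span_singleton_self y)]
    exact ⟨inOpenHalfSpace_vecCons_of_apply_eq_zero hy hψy hφ,
      inOpenHalfSpace_vecCons_of_apply_eq_zero (φ := ψ) (neg_ne_zero.2 hy) (by simp [hψy]) hφ⟩

end OpenHalfSpace

section Counting

variable {𝕜 ι V : Type*} [Field 𝕜] [LinearOrder 𝕜] [AddCommGroup V] [Module 𝕜 V]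

lemma card_halfSpaceSigns_comp_equiv {κ : Type*} [Fintype ι] [Fintype κ] (e : κ ≃ ι) (x : ι → V) :
    (halfSpaceSigns 𝕜 (x ∘ e)).card = (halfSpaceSigns 𝕜 x).card := by
  refine Finset.card_equiv (e.arrowCongr (.refl ℤˣ)) fun ε => ?_
  simp [mem_halfSpaceSigns, InOpenHalfSpace, e.forall_congr_left]

lemma card_eq_sum_card_filter_vecCons_mem {α : Type*} [Fintype α] [DecidableEq α] {N : ℕ}
    (S : Finset (Fin (N + 1) → α)) :
    S.card = ∑ a, Finset.card {f : Fin N → α | Matrix.vecCons a f ∈ S} := by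
  conv_lhs => rw [← Finset.filter_univ_mem S]
  simp only [Finset.card_filter]
  rw [← (Fin.consEquiv fun _ => α).sum_comp, Fintype.sum_prod_type]
  rfl

/-- Deletion and restriction: the functionals on the quotient by `y` are those vanishing at `y`. -/
lemma card_halfSpaceSigns_vecCons [IsStrictOrderedRing 𝕜] {N : ℕ} {y : V} (hy : y ≠ 0)
    (x : Fin N → V) :
    (halfSpaceSigns 𝕜 (Matrix.vecCons y x)).card =
      (halfSpaceSigns 𝕜 x).card + (halfSpaceSigns 𝕜 ((𝕜 ∙ y).mkQ ∘ x)).card := by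
  classical
  have hsmul (s : ℤˣ) (ε : Fin N → ℤˣ) :
      (Matrix.vecCons s ε : Fin (N + 1) → ℤˣ) • Matrix.vecCons y x =
        Matrix.vecCons (s • y) (ε • x) := by
    ext i
    cases i using Fin.cases <;> simp
  have hmkQ (ε : Fin N → ℤˣ) : ε • ((𝕜 ∙ y).mkQ ∘ x) = (𝕜 ∙ y).mkQ ∘ (ε • x) := by
    ext i
    simp [Units.smul_def]
  calc (halfSpaceSigns 𝕜 (Matrix.vecCons y x)).card
      = ∑ s : ℤˣ, Finset.card
          {ε : Fin N → ℤˣ | InOpenHalfSpace 𝕜 (Matrix.vecCons (s • y) (ε • x))} := by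
        simp only [card_eq_sum_card_filter_vecCons_mem, mem_halfSpaceSigns, hsmul]
    _ = Finset.card {ε : Fin N → ℤˣ | InOpenHalfSpace 𝕜 (Matrix.vecCons y (ε • x))} +
        Finset.card {ε : Fin N → ℤˣ | InOpenHalfSpace 𝕜 (Matrix.vecCons (-y) (ε • x))} := by
        rw [UnitsInt.univ, Finset.sum_pair (by decide)]
        simp
    _ = _ := by
        rw [← Finset.card_union_add_card_inter, ← Finset.filter_or, ← Finset.filter_and]
        congr 2 <;> ext ε <;>
          simp [mem_halfSpaceSigns, hmkQ, inOpenHalfSpace_vecCons_or_neg hy,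
            inOpenHalfSpace_vecCons_and_neg hy]

lemma sum_range_choose_succ_succ (N d : ℕ) :
    ∑ i ∈ Finset.range (d + 1), (N + 1).choose i =
      ∑ i ∈ Finset.range (d + 1), N.choose i + ∑ i ∈ Finset.range d, N.choose i := by
  rw [Finset.sum_range_succ', Finset.sum_range_succ' (fun i => N.choose i)]
  simp only [Nat.choose_succ_succ', Finset.sum_add_distrib, Nat.choose_zero_right]
  ring

lemma InGeneralPosition.card_halfSpaceSigns_fin [IsStrictOrderedRing 𝕜] (N : ℕ) {V : Type*}
    [AddCommGroup V] [Module 𝕜 V] [FiniteDimensional 𝕜 V] {x : Fin (N + 1) → V}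
    (hx : InGeneralPosition 𝕜 x) :
    (halfSpaceSigns 𝕜 x).card = 2 * ∑ i ∈ Finset.range (Module.finrank 𝕜 V), N.choose i := by
  rcases Nat.eq_zero_or_pos (Module.finrank 𝕜 V) with hV | hV
  · have := Module.finrank_zero_iff.1 hV
    simp [hV, halfSpaceSigns, InOpenHalfSpace, Subsingleton.elim _ (0 : V)]
  have h0 := hx.ne_zero hV 0
  have hfinrank := finrank_quotient_span_singleton_add_one (K := 𝕜) h0
  have hrec := card_halfSpaceSigns_vecCons (𝕜 := 𝕜) h0 (Matrix.vecTail x)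
  rw [show Matrix.vecCons (x 0) (Matrix.vecTail x) = x from Matrix.cons_head_tail x] at hrec
  rw [hrec, ← hfinrank]
  cases N with
  | zero =>
    rw [Finset.sum_range_succ']
    simp [halfSpaceSigns, InOpenHalfSpace]
  | succ N =>
    have htail : InGeneralPosition 𝕜 (Matrix.vecTail x) := hx.comp (Fin.succ_injective _)
    rw [InGeneralPosition.card_halfSpaceSigns_fin N htail,
      InGeneralPosition.card_halfSpaceSigns_fin N (hx.mkQ_comp_vecTail h0), ← hfinrank,
      sum_range_choose_succ_succ, mul_add]

theorem InGeneralPosition.card_halfSpaceSigns [IsStrictOrderedRing 𝕜] [FiniteDimensional 𝕜 V]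
    [Fintype ι] [Nonempty ι] {x : ι → V} (hx : InGeneralPosition 𝕜 x) :
    (halfSpaceSigns 𝕜 x).card =
      2 * ∑ i ∈ Finset.range (Module.finrank 𝕜 V), (Fintype.card ι - 1).choose i := by
  let e : Fin (Fintype.card ι - 1 + 1) ≃ ι :=
    (finCongr (Nat.sub_add_cancel Fintype.card_pos)).trans (Fintype.equivFin ι).symm
  rw [← card_halfSpaceSigns_comp_equiv e, (hx.comp e.injective).card_halfSpaceSigns_fin]

end Counting

section ProductMeasure

variable {ι : Type*} [Fintype ι]

lemma ae_pi_of_forall_ae_update {X : ι → Type*} [∀ i, MeasurableSpace (X i)] [DecidableEq ι]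
    {μ : ∀ i, Measure (X i)} [∀ i, SigmaFinite (μ i)] {p : (∀ i, X i) → Prop}
    (hp : MeasurableSet {x | p x}) (i : ι) (h : ∀ x, ∀ᵐ y ∂μ i, p (Function.update x i y)) :
    ∀ᵐ x ∂Measure.pi μ, p x := by
  let f : (∀ i, X i) → ENNReal := {x | ¬p x}.indicator 1
  have hf : Measurable f := measurable_one.indicator hp.compl
  have hupdate (x : ∀ i, X i) : ∫⁻ y, f (Function.update x i y) ∂μ i = 0 := by
    refine (lintegral_congr_ae ?_).trans lintegral_zero
    filter_upwards [h x] with y hy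
    simp [f, hy]
  have hzero : ∫⁻ x, f x ∂Measure.pi μ = 0 := by
    rcases isEmpty_or_nonempty (∀ i, X i) with _ | ⟨⟨x⟩⟩
    · exact lintegral_of_isEmpty _ f
    · rw [lintegral_eq_lmarginal_univ x, lmarginal_erase' f hf (Finset.mem_univ i)]
      simp [hupdate, lmarginal]
  rwa [lintegral_indicator_one (s := {x | ¬p x}) hp.compl] at hzero

lemma card_mul_measure_eq_of_ae_card_filter_eq {Ω : Type*} [MeasurableSpace Ω] {P : Measure Ω}
    [IsProbabilityMeasure P] {T : ι → Ω → Ω} (hT : ∀ i, MeasurePreserving (T i) P P) {A : Set Ω}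
    [DecidablePred (· ∈ A)] (hA : MeasurableSet A) {c : ℕ}
    (hc : ∀ᵐ ω ∂P, Finset.card {i | T i ω ∈ A} = c) : Fintype.card ι * P A = c :=
  calc Fintype.card ι * P A = ∑ i, P (T i ⁻¹' A) := by
        simp [(hT _).measure_preimage hA.nullMeasurableSet]
    _ = ∑ i, ∫⁻ ω, A.indicator 1 (T i ω) ∂P := by
        refine Finset.sum_congr rfl fun i _ => ?_
        exact (lintegral_indicator_one ((hT i).measurable hA)).symm
    _ = ∫⁻ ω, ∑ i, A.indicator 1 (T i ω) ∂P :=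
        (lintegral_finsetSum _ fun i _ =>
          (measurable_one.indicator hA).comp (hT i).measurable).symm
    _ = ∫⁻ _, c ∂P := by
        refine lintegral_congr_ae ?_
        filter_upwards [hc] with ω hω
        simp [← hω, Set.indicator_apply]
    _ = c := by simp

end ProductMeasure

section GeneralPositionMeasure

lemma ae_notMem_of_lt_top {K V : Type*} [Field K] [AddCommGroup V] [Module K V]
    [MeasurableSpace V] {μ : Measure V}
    (hμ : ∀ φ : Module.Dual K V, φ ≠ 0 → ∀ᵐ x ∂μ, φ x ≠ 0) {p : Submodule K V} (hp : p < ⊤) :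
    ∀ᵐ x ∂μ, x ∉ p := by
  obtain ⟨φ, hφ, hpφ⟩ := p.exists_le_ker_of_lt_top hp
  filter_upwards [hμ φ hφ] with x hx hxp
  exact hx (hpφ hxp)

lemma isOpen_setOfPred_linearIndepOn {𝕜 ι V : Type*} [NontriviallyNormedField 𝕜]
    [CompleteSpace 𝕜] [NormedAddCommGroup V] [NormedSpace 𝕜 V] (s : Finset ι) :
    IsOpen {x : ι → V | LinearIndepOn 𝕜 x s} :=
  isOpen_setOfPred_linearIndependent.preimage
    (f := fun (x : ι → V) (i : s) => x i) (by fun_prop)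

variable {ι V : Type*} [Fintype ι] [NormedAddCommGroup V] [NormedSpace ℝ V]
  [FiniteDimensional ℝ V] [MeasurableSpace V] [BorelSpace V] {μ : ι → Measure V}
  [∀ i, SigmaFinite (μ i)]

lemma ae_linearIndepOn_insert {s : Finset ι} (hs : s.card < Module.finrank ℝ V) {a : ι}
    (ha : a ∉ s) (hμ : ∀ φ : Module.Dual ℝ V, φ ≠ 0 → ∀ᵐ x ∂μ a, φ x ≠ 0) :
    ∀ᵐ x ∂Measure.pi μ, LinearIndepOn ℝ x s → LinearIndepOn ℝ x (insert a (s : Set ι)) := by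
  classical
  refine ae_pi_of_forall_ae_update ?_ a fun x => ?_
  · rw [← Finset.coe_insert]
    exact (isOpen_setOfPred_linearIndepOn s).measurableSet.imp
      (isOpen_setOfPred_linearIndepOn (insert a s)).measurableSet
  · have hspan : Submodule.span ℝ (s.image x : Set V) < ⊤ :=
      span_lt_top_of_card_lt_finrank (by simpa using Finset.card_image_le.trans_lt hs)
    filter_upwards [ae_notMem_of_lt_top hμ hspan] with y hy hli
    have himage : Function.update x a y '' s = s.image x := by
      rw [Finset.coe_image]
      exact Set.image_congr fun i hi => Function.update_of_ne (ne_of_mem_of_not_mem hi ha) y x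
    rw [linearIndepOn_insert ha, himage, Function.update_self]
    exact ⟨hli, hy⟩

lemma ae_inGeneralPosition (hμ : ∀ i, ∀ φ : Module.Dual ℝ V, φ ≠ 0 → ∀ᵐ x ∂μ i, φ x ≠ 0) :
    ∀ᵐ x ∂Measure.pi μ, InGeneralPosition ℝ x := by
  classical
  refine ae_all_iff.2 fun s => ?_
  induction s using Finset.induction_on with
  | empty => exact .of_forall fun x _ => by simp
  | insert a s ha ih =>
    rw [Finset.card_insert_of_notMem ha, eventually_imp_distrib_left]
    intro hs
    filter_upwards [ih, ae_linearIndepOn_insert hs ha (hμ a)] with x hx hinsert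
    simpa using hinsert (hx (Nat.le_of_succ_le hs))

end GeneralPositionMeasure

section HalfSpaceProbability

lemma measurePreserving_units_smul {G : Type*} [AddGroup G] [MeasurableSpace G] [MeasurableNeg G]
    (μ : Measure G) [μ.IsNegInvariant] (s : ℤˣ) : MeasurePreserving (s • ·) μ μ := by
  rcases Int.units_eq_one_or s with rfl | rfl
  · simpa [Function.id_def] using MeasurePreserving.id μ
  · simpa [Units.smul_def] using Measure.measurePreserving_neg μ

variable {ι V : Type*} [NormedAddCommGroup V] [NormedSpace ℝ V] [FiniteDimensional ℝ V]

lemma isOpen_setOfPred_inOpenHalfSpace [Finite ι] : IsOpen {x : ι → V | InOpenHalfSpace ℝ x} := by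
  simp only [InOpenHalfSpace, Set.ofPred_exists, Set.ofPred_forall]
  refine isOpen_iUnion fun φ => isOpen_iInter_of_finite fun i => isOpen_lt continuous_const ?_
  exact φ.continuous_of_finiteDimensional.comp (continuous_apply i)

variable [Fintype ι] [Nonempty ι] [MeasurableSpace V] [BorelSpace V]

lemma two_pow_mul_measure_inOpenHalfSpace {P : Measure (ι → V)} [IsProbabilityMeasure P]
    (hsign : ∀ ε : ι → ℤˣ, MeasurePreserving (ε • ·) P P)
    (hgen : ∀ᵐ x ∂P, InGeneralPosition ℝ x) :
    2 ^ Fintype.card ι * P {x | InOpenHalfSpace ℝ x} =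
      ((2 * ∑ i ∈ Finset.range (Module.finrank ℝ V), (Fintype.card ι - 1).choose i : ℕ) :
        ENNReal) := by
  classical
  have hcount : ∀ᵐ x ∂P, Finset.card {ε : ι → ℤˣ | ε • x ∈ {x | InOpenHalfSpace ℝ x}} =
      2 * ∑ i ∈ Finset.range (Module.finrank ℝ V), (Fintype.card ι - 1).choose i := by
    filter_upwards [hgen] with x hx
    rw [← hx.card_halfSpaceSigns]
    congr 1
  simpa using card_mul_measure_eq_of_ae_card_filter_eq hsign
    isOpen_setOfPred_inOpenHalfSpace.measurableSet hcount

theorem wendel_general {μ : ι → Measure V} [∀ i, IsProbabilityMeasure (μ i)]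
    [∀ i, (μ i).IsNegInvariant]
    (hμ : ∀ i, ∀ φ : Module.Dual ℝ V, φ ≠ 0 → ∀ᵐ x ∂μ i, φ x ≠ 0) :
    Measure.pi μ {x | ∃ φ : Module.Dual ℝ V, φ ≠ 0 ∧ ∀ i, 0 ≤ φ (x i)} =
      ENNReal.ofReal ((∑ i ∈ Finset.range (Module.finrank ℝ V),
        ((Fintype.card ι - 1).choose i : ℝ)) / 2 ^ (Fintype.card ι - 1)) := by
  have hgen := ae_inGeneralPosition hμ
  have hopen : {x | ∃ φ : Module.Dual ℝ V, φ ≠ 0 ∧ ∀ i, 0 ≤ φ (x i)}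
      =ᵐ[Measure.pi μ] {x | InOpenHalfSpace ℝ x} := by
    filter_upwards [hgen] with x hx using propext hx.inOpenHalfSpace_iff.symm
  have hprob := two_pow_mul_measure_inOpenHalfSpace
    (fun ε => measurePreserving_pi μ μ fun i => measurePreserving_units_smul (μ i) (ε i)) hgen
  rw [← measure_congr hopen, ← mul_pow_sub_one Fintype.card_ne_zero, mul_assoc, Nat.cast_mul,
    Nat.cast_ofNat, ENNReal.mul_right_inj (by simp) (by simp)] at hprob
  rw [ENNReal.ofReal_div_of_pos (by positivity), ENNReal.eq_div_iff (by simp) (by simp),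
    ENNReal.ofReal_pow (by simp), ENNReal.ofReal_ofNat, hprob, ← Nat.cast_sum,
    ENNReal.ofReal_natCast]

end HalfSpaceProbability

section Rotations

variable {E : Type*} [NormedAddCommGroup E] [InnerProductSpace ℝ E] [FiniteDimensional ℝ E]

lemma exists_ne_zero_forall_dual_apply_eq_inner {φ : Module.Dual ℝ E} (hφ : φ ≠ 0) :
    ∃ w : E, w ≠ 0 ∧ ∀ x, φ x = ⟪x, w⟫ := by
  refine ⟨(InnerProductSpace.toDual ℝ E).symm φ.toContinuousLinearMap, by simpa using hφ,
    fun x => ?_⟩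
  rw [real_inner_comm]
  simp

lemma exists_unit_inner_nonneg_iff {ι : Type*} {x : ι → E} :
    (∃ w : E, ‖w‖ = 1 ∧ ∀ i, 0 ≤ ⟪x i, w⟫) ↔
      ∃ φ : Module.Dual ℝ E, φ ≠ 0 ∧ ∀ i, 0 ≤ φ (x i) := by
  constructor
  · rintro ⟨w, hw, hx⟩
    refine ⟨innerₛₗ ℝ w, ?_, fun i => by simpa [real_inner_comm] using hx i⟩
    intro h
    have := LinearMap.congr_fun h w
    simp [hw] at this
  · rintro ⟨φ, hφ, hx⟩
    obtain ⟨w, hw0, hw⟩ := exists_ne_zero_forall_dual_apply_eq_inner hφ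
    refine ⟨‖w‖⁻¹ • w, norm_smul_inv_norm hw0, fun i => ?_⟩
    rw [real_inner_smul_right, ← hw]
    exact mul_nonneg (by positivity) (hx i)

variable [MeasurableSpace E] [BorelSpace E]

/-- By Fubini, almost every hyperplane is null, and rotations move any hyperplane to any other. -/
lemma ae_inner_ne_zero_of_rotation_invariant {μ : Measure E} [SFinite μ]
    (hrot : ∀ T : E ≃ₗᵢ[ℝ] E, μ.map T = μ) (h0 : ∀ᵐ x ∂μ, x ≠ 0) {w : E} (hw : w ≠ 0) :
    ∀ᵐ x ∂μ, ⟪x, w⟫ ≠ 0 := by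
  have hvol : ∀ᵐ x ∂μ, ∀ᵐ v : E, ⟪x, v⟫ ≠ 0 := by
    filter_upwards [h0] with x hx
    have hker : LinearMap.ker (innerₛₗ ℝ x) ≠ ⊤ := fun h => hx (by
      have : x ∈ LinearMap.ker (innerₛₗ ℝ x) := h ▸ Submodule.mem_top
      simpa using this)
    simpa using measure_eq_zero_iff_ae_notMem.1 (Measure.addHaar_submodule volume _ hker)
  rw [Measure.ae_ae_comm (by measurability)] at hvol
  obtain ⟨v, hv⟩ := hvol.exists
  let T := (ℝ ∙ (‖v‖ • w - ‖w‖ • v))ᗮ.reflection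
  have hT : T (‖v‖ • w) = ‖w‖ • v :=
    Submodule.reflection_sub (by simp [norm_smul, mul_comm])
  rw [← hrot T, ae_map_iff T.continuous.aemeasurable (by measurability)] at hv
  filter_upwards [hv] with x hx h
  have hTx : ‖w‖ * ⟪T x, v⟫ = 0 := by
    rw [← real_inner_smul_right, ← hT, T.inner_map_map, real_inner_smul_right, h, mul_zero]
  exact hx ((mul_eq_zero.1 hTx).resolve_left (norm_ne_zero_iff.2 hw))

end Rotations

namespace IsUniformSphere

variable {n : ℕ} {r : ℝ} {μ : Measure (EuclideanSpace ℝ (Fin n))}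

lemma isNegInvariant (hμ : IsUniformSphere n r μ) : μ.IsNegInvariant :=
  ⟨hμ.2.2 (LinearIsometryEquiv.neg ℝ)⟩

lemma ae_dual_apply_ne_zero (hμ : IsUniformSphere n r μ) (hr : r ≠ 0)
    (φ : Module.Dual ℝ (EuclideanSpace ℝ (Fin n))) (hφ : φ ≠ 0) : ∀ᵐ x ∂μ, φ x ≠ 0 := by
  obtain ⟨hprob, hsphere, hrot⟩ := hμ
  have h0 : ∀ᵐ x ∂μ, x ≠ 0 := by
    filter_upwards [compl_mem_ae_iff.2 hsphere] with x hx hx0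
    simp [hx0, hr.symm] at hx
  obtain ⟨w, hw0, hw⟩ := exists_ne_zero_forall_dual_apply_eq_inner hφ
  simpa only [hw] using ae_inner_ne_zero_of_rotation_invariant hrot h0 hw0

end IsUniformSphere

/-- **Wendel's theorem.** If `N` points are drawn i.i.d. uniformly at random on the unit
sphere `S^{n-1} ⊂ ℝⁿ`, the probability that all of them lie in a common closed hemisphere
(i.e. there is a unit vector `w` with `⟨x i, w⟩ ≥ 0` for all `i`) equals
`2^{-(N-1)} ∑_{i=0}^{n-1} C(N-1, i)`. -/
theorem wendel (n N : ℕ) (hn : 1 ≤ n) (hN : 1 ≤ N)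
    (μ : Measure (EuclideanSpace ℝ (Fin n))) (hμ : IsUniformSphere n 1 μ) :
    (Measure.pi fun _ : Fin N => μ)
      {x : Fin N → EuclideanSpace ℝ (Fin n) |
        ∃ w : EuclideanSpace ℝ (Fin n), ‖w‖ = 1 ∧ ∀ i : Fin N, 0 ≤ ⟪x i, w⟫} =
    ENNReal.ofReal ((∑ i ∈ Finset.range n, ((N - 1).choose i : ℝ)) / 2 ^ (N - 1)) := by
  have := hμ.1
  have := hμ.isNegInvariant
  have : Nonempty (Fin N) := ⟨⟨0, hN⟩⟩
  simpa only [exists_unit_inner_nonneg_iff, Fintype.card_fin, finrank_euclideanSpace_fin] using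
    wendel_general (μ := fun _ : Fin N => μ) fun _ => hμ.ae_dual_apply_ne_zero one_ne_zero
end
end

section
/- Fix β with 1 < β < 2 and set K_a(n) = ⌊βn⌋ and p_n = 2^{-(K_a(n)-1)} · Σ_{i=0}^{n-1} C(K_a(n)-1, i). Then lim_{n→∞} -(1/n) · log(1 - p_n) = β · D(1/β ‖ 1/2) > 0, where D(x ‖ 1/2) = x·log(2x) + (1-x)·log(2(1-x)). In particular, p_n → 1 exponentially fast as n → ∞. -/
/-!
`1 - p_n` is the upper tail `∑_{i ≥ n} C(N, i) / 2^N` with `N = ⌊βn⌋ - 1`. Compare with the binomial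
distribution of parameters `N` and `k/N`. Its mode is `k`, so the mass at `k` is at least
`1/(N + 1)`; and for `k/N ≥ 1/2` every sequence with at least `k` successes is at least as likely
as one with exactly `k`. The latter has probability `exp(-N H(k/N))`, with `H` the binary entropy,
so `exp(N H(k/N)) / (N + 1) ≤ ∑_{i ≥ k} C(N, i) ≤ exp(N H(k/N))`. Since `N/n → β` and
`D(x ‖ 1/2) = log 2 - H(x)`, taking `k = n` yields the rate `β (log 2 - H(1/β))`.
-/

open Filter
open scoped Topology

noncomputable section

/-- `pWendel β n` is the probability (by Wendel's theorem) that `K_a(n) = ⌊βn⌋` points drawn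
i.i.d. uniformly on the unit sphere `S^{n-1} ⊂ ℝⁿ` all lie in a common closed hemisphere:
`p_n = 2^{-(K_a(n)-1)} ∑_{i=0}^{n-1} C(K_a(n)-1, i)`. -/
def pWendel (β : ℝ) (n : ℕ) : ℝ :=
  (∑ i ∈ Finset.range n, ((⌊β * n⌋₊ - 1).choose i : ℝ)) / 2 ^ (⌊β * n⌋₊ - 1)

/-- The binary relative entropy `D(x ‖ 1/2) = x log(2x) + (1-x) log(2(1-x))`. -/
def Dhalf (x : ℝ) : ℝ := x * Real.log (2 * x) + (1 - x) * Real.log (2 * (1 - x))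

theorem factorial_mul_pow_le_factorial_mul_pow_self (k i : ℕ) :
    k.factorial * k ^ i ≤ i.factorial * k ^ k := by
  rcases le_total k i with hki | hik
  · calc k.factorial * k ^ i = k.factorial * k ^ (i - k) * k ^ k := by
          rw [mul_assoc, ← pow_add, Nat.sub_add_cancel hki]
      _ ≤ i.factorial * k ^ k := by
          gcongr
          exact Nat.factorial_mul_pow_sub_le_factorial hki
  · calc k.factorial * k ^ i = i.factorial * k.descFactorial (k - i) * k ^ i := by
          rw [← Nat.factorial_mul_descFactorial (Nat.sub_le k i), Nat.sub_sub_self hik]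
      _ ≤ i.factorial * k ^ (k - i) * k ^ i := by
          gcongr
          exact Nat.descFactorial_le_pow _ _
      _ = i.factorial * k ^ k := by
          rw [mul_assoc, ← pow_add, Nat.sub_add_cancel hik]

theorem choose_mul_pow_mul_pow_le {k N i : ℕ} (hk : k ≤ N) (hi : i ≤ N) :
    N.choose i * (k ^ i * (N - k) ^ (N - i)) ≤ N.choose k * (k ^ k * (N - k) ^ (N - k)) := by
  have hpos : 0 < (i.factorial * (N - i).factorial) * (k.factorial * (N - k).factorial) := by
    positivity
  refine le_of_mul_le_mul_left ?_ hpos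
  calc (i.factorial * (N - i).factorial) * (k.factorial * (N - k).factorial) *
        (N.choose i * (k ^ i * (N - k) ^ (N - i)))
      = N.factorial * ((k.factorial * k ^ i) * ((N - k).factorial * (N - k) ^ (N - i))) := by
        rw [← Nat.choose_mul_factorial_mul_factorial hi]
        ring
    _ ≤ N.factorial *
          ((i.factorial * k ^ k) * ((N - i).factorial * (N - k) ^ (N - k))) := by
        gcongr N.factorial * (?_ * ?_) <;> exact factorial_mul_pow_le_factorial_mul_pow_self _ _
    _ = (i.factorial * (N - i).factorial) * (k.factorial * (N - k).factorial) *
          (N.choose k * (k ^ k * (N - k) ^ (N - k))) := by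
        rw [← Nat.choose_mul_factorial_mul_factorial hk]
        ring

theorem pow_self_le_succ_mul_choose_mul_pow_self {k N : ℕ} (hk : k ≤ N) :
    N ^ N ≤ (N + 1) * (N.choose k * (k ^ k * (N - k) ^ (N - k))) :=
  calc N ^ N = (k + (N - k)) ^ N := by rw [Nat.add_sub_cancel' hk]
    _ = ∑ i ∈ Finset.range (N + 1), N.choose i * (k ^ i * (N - k) ^ (N - i)) := by
        rw [add_pow]
        exact Finset.sum_congr rfl fun i _ => mul_comm _ _
    _ ≤ ∑ _i ∈ Finset.range (N + 1), N.choose k * (k ^ k * (N - k) ^ (N - k)) :=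
        Finset.sum_le_sum fun i hi =>
          choose_mul_pow_mul_pow_le hk (Finset.mem_range_succ_iff.1 hi)
    _ = (N + 1) * (N.choose k * (k ^ k * (N - k) ^ (N - k))) := by
        rw [Finset.sum_const, Finset.card_range, smul_eq_mul]

section OrderedSemiring

variable {R : Type*} [CommSemiring R] [PartialOrder R] [IsOrderedRing R] {a b : R}

theorem pow_mul_pow_sub_le_pow_mul_pow_sub (hb : 0 ≤ b) (hba : b ≤ a) {k i N : ℕ} (hki : k ≤ i)
    (hi : i ≤ N) : a ^ k * b ^ (N - k) ≤ a ^ i * b ^ (N - i) :=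
  have ha : 0 ≤ a := hb.trans hba
  calc a ^ k * b ^ (N - k) = a ^ k * b ^ (i - k) * b ^ (N - i) := by
        rw [mul_assoc, ← pow_add, add_comm, Nat.sub_add_sub_cancel hi hki]
    _ ≤ a ^ k * a ^ (i - k) * b ^ (N - i) := by gcongr
    _ = a ^ i * b ^ (N - i) := by rw [← pow_add, Nat.add_sub_cancel' hki]

/-- Chernoff's inequality for the binomial distribution with success odds `a : b`, denominators
cleared. -/
theorem sum_Icc_choose_mul_pow_mul_pow_le_add_pow (hb : 0 ≤ b) (hba : b ≤ a) (k N : ℕ) :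
    (∑ i ∈ Finset.Icc k N, (N.choose i : R)) * (a ^ k * b ^ (N - k)) ≤ (a + b) ^ N := by
  have ha : 0 ≤ a := hb.trans hba
  rw [Finset.sum_mul, add_pow]
  calc ∑ i ∈ Finset.Icc k N, (N.choose i : R) * (a ^ k * b ^ (N - k))
      ≤ ∑ i ∈ Finset.Icc k N, a ^ i * b ^ (N - i) * N.choose i := by
        refine Finset.sum_le_sum fun i hi => ?_
        obtain ⟨hki, hiN⟩ := Finset.mem_Icc.1 hi
        rw [mul_comm]
        gcongr ?_ * _
        exact pow_mul_pow_sub_le_pow_mul_pow_sub hb hba hki hiN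
    _ ≤ ∑ i ∈ Finset.range (N + 1), a ^ i * b ^ (N - i) * N.choose i := by
        refine Finset.sum_le_sum_of_subset_of_nonneg (fun i hi => ?_) fun i _ _ => by positivity
        exact Finset.mem_range_succ_iff.2 (Finset.mem_Icc.1 hi).2

end OrderedSemiring

theorem sum_Icc_choose_mul_pow_self_le {k N : ℕ} (hk : k ≤ N) (hN : N ≤ 2 * k) :
    (∑ i ∈ Finset.Icc k N, N.choose i) * (k ^ k * (N - k) ^ (N - k)) ≤ N ^ N := by
  have hodds : N - k ≤ k := by omega
  simpa only [Nat.cast_id, Nat.add_sub_cancel' hk] using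
    sum_Icc_choose_mul_pow_mul_pow_le_add_pow (Nat.zero_le (N - k)) hodds k N

theorem natCast_mul_binEntropy_div_eq_log_sub_log {k N : ℕ} (hk : k ≤ N) :
    N * Real.binEntropy (k / N) =
      Real.log ((N ^ N : ℕ) : ℝ) - Real.log ((k ^ k * (N - k) ^ (N - k) : ℕ) : ℝ) := by
  rcases Nat.eq_zero_or_pos N with rfl | hN
  · simp [Nat.le_zero.1 hk]
  have hN' : (N : ℝ) ≠ 0 := by positivity
  have hlog (m : ℕ) : (N : ℝ) * Real.negMulLog (m / N) = m * Real.log N - m * Real.log m := by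
    rcases eq_or_ne m 0 with rfl | hm
    · simp
    · rw [Real.negMulLog, Real.log_div (by positivity) hN']
      field_simp
      ring
  have hcompl : 1 - (k / N : ℝ) = (N - k : ℕ) / N := by
    rw [Nat.cast_sub hk, sub_div, div_self hN']
  have hpow (m : ℕ) : ((m ^ m : ℕ) : ℝ) ≠ 0 :=
    Nat.cast_ne_zero.2 Nat.pow_self_pos.ne'
  rw [Real.binEntropy_eq_negMulLog_add_negMulLog_one_sub, hcompl, mul_add, hlog, hlog,
    Nat.cast_mul, Real.log_mul (hpow _) (hpow _)]
  simp only [Nat.cast_pow, Real.log_pow]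
  rw [Nat.cast_sub hk]
  ring

theorem sum_Icc_choose_pos {k N : ℕ} (hk : k ≤ N) : 0 < ∑ i ∈ Finset.Icc k N, N.choose i :=
  Finset.sum_pos (fun _ hi => Nat.choose_pos (Finset.mem_Icc.1 hi).2) (Finset.nonempty_Icc.2 hk)

theorem log_sum_Icc_choose_le {k N : ℕ} (hk : k ≤ N) (hN : N ≤ 2 * k) :
    Real.log ((∑ i ∈ Finset.Icc k N, N.choose i : ℕ) : ℝ) ≤ N * Real.binEntropy (k / N) := by
  have hsum : 0 < ∑ i ∈ Finset.Icc k N, N.choose i := sum_Icc_choose_pos hk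
  have hweight : 0 < k ^ k * (N - k) ^ (N - k) := Nat.mul_pos Nat.pow_self_pos Nat.pow_self_pos
  rw [natCast_mul_binEntropy_div_eq_log_sub_log hk, le_sub_iff_add_le,
    ← Real.log_mul (by positivity) (by positivity), ← Nat.cast_mul]
  exact Real.log_le_log (by positivity) (by exact_mod_cast sum_Icc_choose_mul_pow_self_le hk hN)

theorem natCast_mul_binEntropy_sub_log_le_log_choose {k N : ℕ} (hk : k ≤ N) :
    N * Real.binEntropy (k / N) - Real.log (N + 1) ≤ Real.log (N.choose k) := by
  have hchoose : 0 < N.choose k := Nat.choose_pos hk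
  have hweight : 0 < k ^ k * (N - k) ^ (N - k) := Nat.mul_pos Nat.pow_self_pos Nat.pow_self_pos
  have hpow : 0 < N ^ N := Nat.pow_self_pos
  have hlog := Real.log_le_log (by positivity)
    (Nat.cast_le (α := ℝ).2 (pow_self_le_succ_mul_choose_mul_pow_self hk))
  rw [Nat.cast_mul, Nat.cast_mul, Real.log_mul (by positivity) (by positivity),
    Real.log_mul (by positivity) (by positivity), Nat.cast_succ] at hlog
  linarith [natCast_mul_binEntropy_div_eq_log_sub_log hk]

theorem tendsto_log_natCast_add_one_div :
    Tendsto (fun n : ℕ => Real.log (n + 1) / n) atTop (𝓝 0) := by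
  have h := (Real.tendsto_pow_log_div_mul_add_atTop 1 (-1) 1 one_ne_zero).comp
    (tendsto_atTop_add_const_right atTop (1 : ℝ) tendsto_natCast_atTop_atTop)
  simpa [Function.comp_def] using h

theorem tendsto_log_sum_Icc_choose_div {ι : Type*} {l : Filter ι} {k N : ι → ℕ} {x : ℝ}
    (hN : Tendsto N l atTop) (hx : Tendsto (fun a => (k a / N a : ℝ)) l (𝓝 x))
    (hk : ∀ᶠ a in l, k a ≤ N a) (hNk : ∀ᶠ a in l, N a ≤ 2 * k a) :
    Tendsto (fun a => Real.log ((∑ i ∈ Finset.Icc (k a) (N a), (N a).choose i : ℕ) : ℝ) / N a) l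
      (𝓝 (Real.binEntropy x)) := by
  have hupper : Tendsto (fun a => Real.binEntropy (k a / N a)) l (𝓝 (Real.binEntropy x)) :=
    (Real.binEntropy_continuous.tendsto x).comp hx
  have hlower : Tendsto (fun a => Real.binEntropy (k a / N a) - Real.log (N a + 1) / N a) l
      (𝓝 (Real.binEntropy x)) := by
    simpa only [sub_zero, Function.comp_def] using
      hupper.sub (tendsto_log_natCast_add_one_div.comp hN)
  refine tendsto_of_tendsto_of_tendsto_of_le_of_le' hlower hupper ?_ ?_
  · filter_upwards [hk, hN.eventually_gt_atTop 0] with a hka hNa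
    have hchoose : (N a).choose (k a) ≤ ∑ i ∈ Finset.Icc (k a) (N a), (N a).choose i :=
      Finset.single_le_sum_of_canonicallyOrdered (Finset.left_mem_Icc.2 hka)
    have hlog := Real.log_le_log (Nat.cast_pos.2 (Nat.choose_pos hka))
      (Nat.cast_le (α := ℝ).2 hchoose)
    rw [le_div_iff₀ (by positivity), sub_mul, div_mul_cancel₀ _ (by positivity), mul_comm]
    exact (natCast_mul_binEntropy_sub_log_le_log_choose hka).trans hlog
  · filter_upwards [hk, hNk, hN.eventually_gt_atTop 0] with a hka hNka hNa
    rw [div_le_iff₀ (by positivity), mul_comm]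
    exact log_sum_Icc_choose_le hka hNka

theorem one_sub_sum_range_choose_div_two_pow {k N : ℕ} (hk : k ≤ N) :
    1 - (∑ i ∈ Finset.range k, (N.choose i : ℝ)) / 2 ^ N =
      ((∑ i ∈ Finset.Icc k N, N.choose i : ℕ) : ℝ) / 2 ^ N := by
  have hrow : ∑ i ∈ Finset.range k, N.choose i + ∑ i ∈ Finset.Icc k N, N.choose i = 2 ^ N := by
    rw [← Finset.Ico_add_one_right_eq_Icc, Finset.sum_range_add_sum_Ico _ (by omega),
      Nat.sum_range_choose]
  have hrow' := congrArg (Nat.cast (R := ℝ)) hrow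
  push_cast at hrow' ⊢
  rw [← hrow', one_sub_div (by rw [hrow']; positivity), add_sub_cancel_left]

theorem tendsto_natCast_floor_mul_sub_one_div {β : ℝ} (hβ : 0 < β) :
    Tendsto (fun n : ℕ => ((⌊β * n⌋₊ - 1 : ℕ) : ℝ) / n) atTop (𝓝 β) := by
  have hfloor : Tendsto (fun n : ℕ => (⌊β * n⌋₊ : ℝ) / n) atTop (𝓝 β) :=
    (tendsto_nat_floor_mul_div_atTop hβ.le).comp tendsto_natCast_atTop_atTop
  have hfloor_pos : ∀ᶠ n : ℕ in atTop, 1 ≤ ⌊β * n⌋₊ :=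
    (tendsto_nat_floor_atTop.comp
      (tendsto_natCast_atTop_atTop.const_mul_atTop hβ)).eventually_ge_atTop 1
  have hlim := hfloor.sub (tendsto_const_div_atTop_nhds_zero_nat (1 : ℝ))
  rw [sub_zero] at hlim
  refine hlim.congr' ?_
  filter_upwards [hfloor_pos] with n hn
  rw [Nat.cast_sub hn, sub_div, Nat.cast_one]

theorem Dhalf_eq_log_two_sub_binEntropy (x : ℝ) : Dhalf x = Real.log 2 - Real.binEntropy x := by
  have hlog (y : ℝ) : y * Real.log (2 * y) = y * Real.log 2 + y * Real.log y := by
    rcases eq_or_ne y 0 with rfl | hy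
    · simp
    · rw [Real.log_mul two_ne_zero hy, mul_add]
  rw [Dhalf, Real.binEntropy, hlog, hlog, Real.log_inv, Real.log_inv]
  ring

theorem Dhalf_pos {x : ℝ} (hx : x ≠ 2⁻¹) : 0 < Dhalf x := by
  rw [Dhalf_eq_log_two_sub_binEntropy]
  exact sub_pos.2 (Real.binEntropy_lt_log_two.2 hx)

theorem tendsto_neg_log_one_sub_pWendel {β : ℝ} (hβ₁ : 1 < β) (hβ₂ : β ≤ 2) :
    Tendsto (fun n : ℕ => -(1 / (n : ℝ)) * Real.log (1 - pWendel β n)) atTop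
      (𝓝 (β * Dhalf (1 / β))) := by
  have hβ : 0 < β := zero_lt_one.trans hβ₁
  set N : ℕ → ℕ := fun n => ⌊β * n⌋₊ - 1
  have hratio : Tendsto (fun n => (N n : ℝ) / n) atTop (𝓝 β) :=
    tendsto_natCast_floor_mul_sub_one_div hβ
  have hle : ∀ᶠ n in atTop, n ≤ N n := by
    filter_upwards [hratio.eventually_const_lt hβ₁, eventually_gt_atTop 0] with n h hn
    rw [one_lt_div (by positivity)] at h
    exact_mod_cast h.le
  have hle_two_mul : ∀ n, N n ≤ 2 * n := fun n =>
    (Nat.sub_le _ _).trans (Nat.floor_le_of_le (by push_cast; gcongr))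
  have hfraction : Tendsto (fun n : ℕ => (n : ℝ) / N n) atTop (𝓝 (1 / β)) := by
    simpa only [one_div, inv_div] using hratio.inv₀ hβ.ne'
  have htail := tendsto_log_sum_Icc_choose_div (tendsto_atTop_mono' atTop hle tendsto_id)
    hfraction hle (Eventually.of_forall hle_two_mul)
  rw [Dhalf_eq_log_two_sub_binEntropy]
  refine (hratio.mul (htail.const_sub (Real.log 2))).congr' ?_
  filter_upwards [hle, eventually_gt_atTop 0] with n hn hn0
  have hsum : 0 < ∑ i ∈ Finset.Icc n (N n), (N n).choose i := sum_Icc_choose_pos hn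
  have hNn : 0 < N n := hn0.trans_le hn
  rw [pWendel, one_sub_sum_range_choose_div_two_pow hn,
    Real.log_div (by positivity) (by positivity), Real.log_pow]
  field_simp
  ring

/-- For `1 < β < 2`, the hemisphere probability `p_n` converges to `1` exponentially fast:
`-(1/n) log(1 - p_n) → β D(1/β ‖ 1/2) > 0`. -/
theorem stmt1 (β : ℝ) (hβ₁ : 1 < β) (hβ₂ : β < 2) :
    Tendsto (fun n : ℕ => -(1 / (n : ℝ)) * Real.log (1 - pWendel β n)) atTop
      (𝓝 (β * Dhalf (1 / β))) ∧ 0 < β * Dhalf (1 / β) := by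
  have hβ : 0 < β := zero_lt_one.trans hβ₁
  refine ⟨tendsto_neg_log_one_sub_pWendel hβ₁ hβ₂.le, mul_pos hβ (Dhalf_pos ?_)⟩
  rw [one_div, Ne, inv_inj]
  exact hβ₂.ne
end
end

section
/- Let n ≥ 4, let u be a unit vector in ℝⁿ, let s be uniformly distributed on the unit sphere S^{n-1} ⊂ ℝⁿ, and let a ∈ (0, 1). Then P[|⟨s, u⟩| > a] ≤ (Γ(n/2)/Γ((n-1)/2)) · √(2/(n-3)) · exp(-(n-3)·a²/2). -/
open MeasureTheory ProbabilityTheory Filter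
open scoped Topology RealInnerProductSpace

noncomputable section

/-
By Fubini, the angle to a fixed vector has the same law under all rotation-invariant probability
measures without an atom at `0`, so `μ` may be replaced by the uniform law on the unit ball.
By Archimedes' hat-box theorem, if `x = (y, z)` is uniform on the unit ball of `F × ℂ`, then
`y / ‖x‖` is uniform on the unit ball of `F`: the map `z ↦ ‖z‖²` pushes area to a multiple of
Lebesgue measure, hence `(y, ‖x‖²)` is uniform on `{(y, v) | ‖y‖² < v < 1}`. The projection of the
sphere of `ℝⁿ` to a line is therefore that of the unit ball of `ℝⁿ⁻² = ℝ × ℝⁿ⁻³`, whose slices have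
volume proportional to `√(1 - t²) ^ (n - 3) ≤ exp (-(n - 3) t² / 2)`. The Gamma quotient comes from
the ratio of the volumes of the unit balls of `ℝⁿ⁻³` and `ℝⁿ⁻²`.
-/

open InnerProductGeometry Metric Module
open scoped ENNReal Real

section Rotation

variable {E : Type*} [NormedAddCommGroup E] [InnerProductSpace ℝ E]

theorem exists_linearIsometryEquiv_apply_eq [FiniteDimensional ℝ E] {F : Type*}
    [NormedAddCommGroup F] [InnerProductSpace ℝ F] [FiniteDimensional ℝ F]
    (h : finrank ℝ E = finrank ℝ F) {u : E} {v : F} (huv : ‖u‖ = ‖v‖) :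
    ∃ T : E ≃ₗᵢ[ℝ] F, T u = v := by
  let S : E ≃ₗᵢ[ℝ] F := (stdOrthonormalBasis ℝ E).equiv (stdOrthonormalBasis ℝ F) (finCongr h)
  exact ⟨S.trans (Submodule.reflection (ℝ ∙ (S u - v))ᗮ),
    Submodule.reflection_sub (by rw [S.norm_map, huv])⟩

variable [MeasurableSpace E] [BorelSpace E]

theorem measurable_angle (u : E) : Measurable (angle u) := by
  unfold angle
  fun_prop

theorem map_angle_eq_map_angle {μ : Measure E} (hμ : ∀ T : E ≃ₗᵢ[ℝ] E, μ.map T = μ) {u v : E}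
    (hu : u ≠ 0) (hv : v ≠ 0) : μ.map (angle u) = μ.map (angle v) := by
  let T : E ≃ₗᵢ[ℝ] E := Submodule.reflection (ℝ ∙ (u - (‖u‖ / ‖v‖) • v))ᗮ
  have hT : T u = (‖u‖ / ‖v‖) • v := Submodule.reflection_sub (by simp [norm_smul, hv])
  have hangle : angle v ∘ T = angle u := by
    ext s
    rw [Function.comp_apply, ← angle_smul_left_of_pos v (T s) (show 0 < ‖u‖ / ‖v‖ by positivity),
      ← hT]
    exact T.toLinearIsometry.angle_map u s
  rw [← hangle, ← Measure.map_map (measurable_angle v) T.continuous.measurable, hμ]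

theorem map_angle_eq_of_map_eq_self [SecondCountableTopology E] {μ ν : Measure E}
    [IsProbabilityMeasure μ] [IsProbabilityMeasure ν] (hμ : ∀ T : E ≃ₗᵢ[ℝ] E, μ.map T = μ)
    (hν : ∀ T : E ≃ₗᵢ[ℝ] E, ν.map T = ν) (hμ₀ : μ {0} = 0) (hν₀ : ν {0} = 0) {u : E}
    (hu : u ≠ 0) : μ.map (angle u) = ν.map (angle u) := by
  have average {ρ σ : Measure E} [IsProbabilityMeasure σ] (hρ : ∀ T : E ≃ₗᵢ[ℝ] E, ρ.map T = ρ)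
      (hσ₀ : σ {0} = 0) {B : Set ℝ} (hB : MeasurableSet B) :
      ρ.map (angle u) B = ∫⁻ x, ρ (angle x ⁻¹' B) ∂σ := by
    have hx : ∀ᵐ x ∂σ, ρ (angle x ⁻¹' B) = ρ.map (angle u) B := by
      filter_upwards [measure_eq_zero_iff_ae_notMem.1 hσ₀] with x hx
      rw [map_angle_eq_map_angle hρ hu hx, Measure.map_apply (measurable_angle x) hB]
    rw [lintegral_congr_ae hx, lintegral_const, measure_univ, mul_one]
  have hmeas : Measurable fun p : E × E ↦ angle p.1 p.2 := by
    unfold angle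
    fun_prop
  ext B hB
  have hpre : MeasurableSet ((fun p : E × E ↦ angle p.1 p.2) ⁻¹' B) := hmeas hB
  calc μ.map (angle u) B = ∫⁻ x, μ (angle x ⁻¹' B) ∂ν := average hμ hν₀ hB
    _ = ∫⁻ s, ν ((angle · s) ⁻¹' B) ∂μ :=
      (Measure.prod_apply hpre).symm.trans (Measure.prod_apply_symm hpre)
    _ = ∫⁻ s, ν (angle s ⁻¹' B) ∂μ := by simp only [angle_comm]
    _ = ν.map (angle u) B := (average hν hμ₀ hB).symm

theorem map_cond_ball [FiniteDimensional ℝ E] {F : Type*} [NormedAddCommGroup F]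
    [InnerProductSpace ℝ F] [FiniteDimensional ℝ F] [MeasurableSpace F] [BorelSpace F]
    (T : E ≃ₗᵢ[ℝ] F) (r : ℝ) :
    (volume[|ball (0 : E) r]).map T = volume[|ball (0 : F) r] := by
  have hball : T ⁻¹' ball 0 r = ball 0 r := by ext; simp
  have hT := T.measurePreserving
  ext B hB
  rw [Measure.map_apply hT.measurable hB, cond_apply measurableSet_ball,
    cond_apply measurableSet_ball, ← hball, ← Set.preimage_inter,
    hT.measure_preimage measurableSet_ball.nullMeasurableSet,
    hT.measure_preimage (measurableSet_ball.inter hB).nullMeasurableSet]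

end Rotation

section HatBox

theorem map_norm_sq_volume_complex :
    (volume : Measure ℂ).map (fun z ↦ ‖z‖ ^ 2) =
      ENNReal.ofReal π • volume.restrict (Set.Ioi 0) := by
  have hball (b : ℝ) : volume (ball (0 : ℂ) √b) = ENNReal.ofReal π * ENNReal.ofReal b := by
    rw [Complex.volume_ball, ← ENNReal.ofReal_pow (Real.sqrt_nonneg b), Real.sq_sqrt', mul_comm,
      ENNReal.ofReal_max, ENNReal.ofReal_zero, max_eq_left zero_le, ← NNReal.coe_real_pi,
      ENNReal.ofReal_coe_nnreal]
  have hmap {a b : ℝ} (hab : a < b) : (volume : Measure ℂ).map (fun z ↦ ‖z‖ ^ 2) (Set.Ico a b) =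
      ENNReal.ofReal π * ENNReal.ofReal b - ENNReal.ofReal π * ENNReal.ofReal a := by
    have hpre : (fun z : ℂ ↦ ‖z‖ ^ 2) ⁻¹' Set.Ico a b = ball 0 √b \ ball 0 √a := by
      ext z
      simp [Real.lt_sqrt, and_comm]
    rw [Measure.map_apply (by fun_prop) measurableSet_Ico, hpre,
      measure_sdiff (ball_subset_ball (Real.sqrt_le_sqrt hab.le))
        measurableSet_ball.nullMeasurableSet measure_ball_lt_top.ne, hball, hball]
  refine Measure.ext_of_Ico' _ _ (fun a b hab ↦ ?_) fun a b hab ↦ ?_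
  · rw [hmap hab]
    finiteness
  · rw [hmap hab, restrict_Ioi_eq_restrict_Ici, Measure.smul_apply,
      Measure.restrict_apply measurableSet_Ico, Set.Ico_inter_Ici, Real.volume_Ico, smul_eq_mul,
      ENNReal.ofReal_sub _ (le_max_right a 0), ENNReal.ofReal_max, ENNReal.ofReal_zero,
      max_eq_left zero_le, ENNReal.mul_sub (by finiteness)]

variable {F : Type*} [NormedAddCommGroup F] [InnerProductSpace ℝ F] [FiniteDimensional ℝ F]
  [MeasurableSpace F] [BorelSpace F]

variable (F) in
theorem map_fst_norm_sq_volume :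
    (volume : Measure (WithLp 2 (F × ℂ))).map (fun x ↦ (x.fst, ‖x‖ ^ 2)) =
      ENNReal.ofReal π • volume.restrict {p : F × ℝ | ‖p.1‖ ^ 2 < p.2} := by
  have hset : MeasurableSet {p : F × ℝ | ‖p.1‖ ^ 2 < p.2} :=
    measurableSet_lt (by fun_prop) (by fun_prop)
  ext B hB
  have hpre : MeasurableSet {q : F × ℂ | (q.1, ‖q.1‖ ^ 2 + ‖q.2‖ ^ 2) ∈ B} :=
    (by fun_prop : Measurable fun q : F × ℂ ↦ (q.1, ‖q.1‖ ^ 2 + ‖q.2‖ ^ 2)) hB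
  have hslice (y : F) : volume {z : ℂ | (y, ‖y‖ ^ 2 + ‖z‖ ^ 2) ∈ B} =
      ENNReal.ofReal π * volume {v : ℝ | (y, v) ∈ B ∧ ‖y‖ ^ 2 < v} := by
    have hBy : MeasurableSet {w : ℝ | (y, ‖y‖ ^ 2 + w) ∈ B} :=
      (by fun_prop : Measurable fun w : ℝ ↦ (y, ‖y‖ ^ 2 + w)) hB
    calc volume {z : ℂ | (y, ‖y‖ ^ 2 + ‖z‖ ^ 2) ∈ B}
        = (volume : Measure ℂ).map (fun z ↦ ‖z‖ ^ 2) {w : ℝ | (y, ‖y‖ ^ 2 + w) ∈ B} :=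
          (Measure.map_apply (by fun_prop) hBy).symm
      _ = ENNReal.ofReal π * volume ((‖y‖ ^ 2 + ·) ⁻¹' {v : ℝ | (y, v) ∈ B ∧ ‖y‖ ^ 2 < v}) := by
        rw [map_norm_sq_volume_complex, Measure.smul_apply, Measure.restrict_apply hBy, smul_eq_mul]
        congr! 2
        ext
        simp
      _ = _ := by rw [measure_preimage_add]
  calc (volume : Measure (WithLp 2 (F × ℂ))).map (fun x ↦ (x.fst, ‖x‖ ^ 2)) B
      = volume {q : F × ℂ | (q.1, ‖q.1‖ ^ 2 + ‖q.2‖ ^ 2) ∈ B} := by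
        rw [Measure.map_apply (by fun_prop) hB,
          ← (WithLp.volume_preserving_ofLp F ℂ).measure_preimage hpre.nullMeasurableSet]
        simp only [WithLp.prod_norm_sq_eq_of_L2]
        rfl
    _ = ∫⁻ y : F, volume {z : ℂ | (y, ‖y‖ ^ 2 + ‖z‖ ^ 2) ∈ B} := Measure.prod_apply hpre
    _ = ENNReal.ofReal π * ∫⁻ y : F, volume {v : ℝ | (y, v) ∈ B ∧ ‖y‖ ^ 2 < v} := by
        simp only [hslice]
        exact lintegral_const_mul _ (measurable_measure_prodMk_left (hB.inter hset))
    _ = _ := by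
        rw [Measure.smul_apply, Measure.restrict_apply hB, smul_eq_mul]
        exact congrArg _ (Measure.prod_apply (hB.inter hset)).symm

theorem volume_norm_sq_lt_inter_preimage_smul (S : Set F) {v : ℝ} (hv : 0 < v) :
    volume {y : F | ‖y‖ ^ 2 < v ∧ (√v)⁻¹ • y ∈ S} =
      ENNReal.ofReal (√v ^ finrank ℝ F) * volume (ball 0 1 ∩ S) := by
  have hset : {y : F | ‖y‖ ^ 2 < v ∧ (√v)⁻¹ • y ∈ S} =
      (fun y ↦ (√v)⁻¹ • y) ⁻¹' (ball 0 1 ∩ S) := by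
    ext y
    have hball : ‖(√v)⁻¹ • y‖ < 1 ↔ ‖y‖ ^ 2 < v := by
      rw [norm_smul, norm_inv, Real.norm_of_nonneg (Real.sqrt_nonneg v),
        inv_mul_lt_one₀ (Real.sqrt_pos.2 hv), Real.lt_sqrt (norm_nonneg y)]
    simp only [Set.mem_ofPred_eq, Set.mem_preimage, Set.mem_inter_iff, mem_ball_zero_iff, hball]
  rw [hset, Measure.addHaar_preimage_smul _ (by positivity), inv_pow, inv_inv,
    abs_of_nonneg (by positivity)]

theorem volume_ball_inter_preimage_inv_norm_smul_fst {S : Set F} (hS : MeasurableSet S) :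
    volume (ball 0 1 ∩ (fun x : WithLp 2 (F × ℂ) ↦ ‖x‖⁻¹ • x.fst) ⁻¹' S) =
      (ENNReal.ofReal π * ∫⁻ v in Set.Ioo (0 : ℝ) 1, ENNReal.ofReal (√v ^ finrank ℝ F)) *
        volume (ball 0 1 ∩ S) := by
  let D : Set (F × ℝ) := {p | p.2 < 1 ∧ (√p.2)⁻¹ • p.1 ∈ S}
  have hD : MeasurableSet D := (measurableSet_lt measurable_snd measurable_const).inter
    ((by fun_prop : Measurable fun p : F × ℝ ↦ (√p.2)⁻¹ • p.1) hS)
  have hset : MeasurableSet {p : F × ℝ | ‖p.1‖ ^ 2 < p.2} :=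
    measurableSet_lt (by fun_prop) (by fun_prop)
  have hpre : ball 0 1 ∩ (fun x : WithLp 2 (F × ℂ) ↦ ‖x‖⁻¹ • x.fst) ⁻¹' S =
      (fun x ↦ (x.fst, ‖x‖ ^ 2)) ⁻¹' D := by
    ext x
    simp [D, Real.sqrt_sq]
  have hslice (v : ℝ) : volume ((·, v) ⁻¹' (D ∩ {p : F × ℝ | ‖p.1‖ ^ 2 < p.2})) =
      (Set.Ioo 0 1).indicator
        (fun v ↦ ENNReal.ofReal (√v ^ finrank ℝ F) * volume (ball 0 1 ∩ S)) v := by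
    by_cases hv : v ∈ Set.Ioo 0 1
    · rw [Set.indicator_of_mem hv, ← volume_norm_sq_lt_inter_preimage_smul S hv.1]
      congr 1
      ext y
      simp [D, hv.2, and_comm]
    · rw [Set.indicator_of_notMem hv]
      refine measure_mono_null (fun y hy ↦ hv ?_) measure_empty
      exact ⟨(sq_nonneg ‖y‖).trans_lt hy.2, hy.1.1⟩
  rw [hpre, ← Measure.map_apply (by fun_prop) hD, map_fst_norm_sq_volume, Measure.smul_apply,
    Measure.restrict_apply hD, smul_eq_mul, Measure.volume_eq_prod,
    Measure.prod_apply_symm (hD.inter hset), lintegral_congr hslice,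
    lintegral_indicator measurableSet_Ioo, lintegral_mul_const _ (by fun_prop), mul_assoc]

theorem map_inv_norm_smul_fst_cond_ball :
    (volume[|ball (0 : WithLp 2 (F × ℂ)) 1]).map (fun x ↦ ‖x‖⁻¹ • x.fst) =
      volume[|ball (0 : F) 1] := by
  obtain ⟨c, hc⟩ : ∃ c : ℝ≥0∞, ∀ S : Set F, MeasurableSet S →
      volume (ball 0 1 ∩ (fun x : WithLp 2 (F × ℂ) ↦ ‖x‖⁻¹ • x.fst) ⁻¹' S) =
        c * volume (ball 0 1 ∩ S) :=
    ⟨_, fun _ ↦ volume_ball_inter_preimage_inv_norm_smul_fst⟩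
  have hvol : volume (ball (0 : WithLp 2 (F × ℂ)) 1) = c * volume (ball (0 : F) 1) := by
    simpa only [Set.preimage_univ, Set.inter_univ] using hc .univ .univ
  have hball : volume (ball (0 : WithLp 2 (F × ℂ)) 1) ≠ 0 := (measure_ball_pos _ _ one_pos).ne'
  have hball' : volume (ball (0 : WithLp 2 (F × ℂ)) 1) ≠ ∞ := measure_ball_lt_top.ne
  have hF : volume (ball (0 : F) 1) ≠ 0 := (measure_ball_pos _ _ one_pos).ne'
  have hc₀ : c ≠ 0 := left_ne_zero_of_mul (hvol ▸ hball)
  have hc' : c ≠ ∞ := fun h ↦ hball' (by rw [hvol, h, ENNReal.top_mul hF])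
  ext S hS
  rw [Measure.map_apply (by fun_prop) hS, cond_apply measurableSet_ball,
    cond_apply measurableSet_ball, hc S hS, hvol, ENNReal.mul_inv (.inl hc₀) (.inl hc'),
    mul_mul_mul_comm, ENNReal.inv_mul_cancel hc₀ hc', one_mul]

theorem map_cos_angle_eq_map_inner_cond_ball {E : Type*} [NormedAddCommGroup E]
    [InnerProductSpace ℝ E] [FiniteDimensional ℝ E] [MeasurableSpace E] [BorelSpace E]
    {μ : Measure E} [IsProbabilityMeasure μ] (hμ : ∀ T : E ≃ₗᵢ[ℝ] E, μ.map T = μ)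
    (hμ₀ : μ {0} = 0) (hEF : finrank ℝ E = finrank ℝ F + 2) {u : E} (hu : ‖u‖ = 1) {e : F}
    (he : ‖e‖ = 1) :
    μ.map (fun s ↦ Real.cos (angle u s)) = (volume[|ball (0 : F) 1]).map (fun y ↦ ⟪e, y⟫) := by
  have hu₀ : u ≠ 0 := norm_ne_zero_iff.1 (hu ▸ one_ne_zero)
  have : Nontrivial E := ⟨u, 0, hu₀⟩
  have hball₀ : volume[|ball (0 : E) 1] {0} = 0 := cond_absolutelyContinuous (measure_singleton 0)
  have : IsProbabilityMeasure (volume[|ball (0 : E) 1]) :=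
    cond_isProbabilityMeasure_of_finite (measure_ball_pos _ _ one_pos).ne' measure_ball_lt_top.ne
  have hmap (ν : Measure E) :
      ν.map (fun s ↦ Real.cos (angle u s)) = (ν.map (angle u)).map Real.cos :=
    (Measure.map_map Real.measurable_cos (measurable_angle u)).symm
  obtain ⟨T, hT⟩ : ∃ T : E ≃ₗᵢ[ℝ] WithLp 2 (F × ℂ), T u = WithLp.toLp 2 (e, 0) :=
    exists_linearIsometryEquiv_apply_eq
      (by rw [hEF, (WithLp.linearEquiv 2 ℝ (F × ℂ)).finrank_eq, finrank_prod,
        Complex.finrank_real_complex])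
      (by simp [hu, he])
  have hcos (s : E) : Real.cos (angle u s) = ⟪e, ‖T s‖⁻¹ • (T s).fst⟫ := by
    rw [cos_angle, hu, one_mul, inner_smul_right, ← T.norm_map s, ← T.inner_map_map, hT,
      WithLp.prod_inner_apply, div_eq_inv_mul]
    simp
  calc μ.map (fun s ↦ Real.cos (angle u s))
      = (volume[|ball (0 : E) 1]).map (fun s ↦ Real.cos (angle u s)) := by
        rw [hmap, hmap, map_angle_eq_of_map_eq_self hμ (map_cond_ball · 1) hμ₀ hball₀ hu₀]
    _ = ((volume[|ball (0 : E) 1]).map T).map (fun x ↦ ⟪e, ‖x‖⁻¹ • x.fst⟫) := by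
        rw [Measure.map_map (by fun_prop) T.continuous.measurable]
        exact congrArg (Measure.map · _) (funext hcos)
    _ = ((volume[|ball (0 : WithLp 2 (F × ℂ)) 1]).map (fun x ↦ ‖x‖⁻¹ • x.fst)).map
          (fun y ↦ ⟪e, y⟫) := by
        rw [map_cond_ball, Measure.map_map (by fun_prop) (by fun_prop)]
        rfl
    _ = (volume[|ball (0 : F) 1]).map (fun y ↦ ⟪e, y⟫) := by
        rw [map_inv_norm_smul_fst_cond_ball]

end HatBox

section Gaussian

theorem lintegral_Ioi_exp_neg_mul_sq_le {a b : ℝ} (ha : 0 ≤ a) (hb : 0 < b) :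
    ∫⁻ t in Set.Ioi a, ENNReal.ofReal (Real.exp (-b * t ^ 2)) ≤
      ENNReal.ofReal (Real.exp (-b * a ^ 2) * (√(π / b) / 2)) := by
  have hpt (t : ℝ) (ht : t ∈ Set.Ioi a) : ENNReal.ofReal (Real.exp (-b * t ^ 2)) ≤
      ENNReal.ofReal (Real.exp (-b * a ^ 2)) * ENNReal.ofReal (Real.exp (-b * (t - a) ^ 2)) := by
    rw [← ENNReal.ofReal_mul (Real.exp_nonneg _), ← Real.exp_add]
    gcongr
    have : 0 ≤ b * (a * (t - a)) :=
      mul_nonneg hb.le (mul_nonneg ha (sub_nonneg.2 (Set.mem_Ioi.1 ht).le))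
    linarith
  have hshift : ∫⁻ t in Set.Ioi a, ENNReal.ofReal (Real.exp (-b * (t - a) ^ 2)) =
      ∫⁻ s in Set.Ioi 0, ENNReal.ofReal (Real.exp (-b * s ^ 2)) := by
    simpa using (measurePreserving_sub_right volume a).setLIntegral_comp_preimage
      (measurableSet_Ioi (a := (0 : ℝ)))
      (by fun_prop : Measurable fun s ↦ ENNReal.ofReal (Real.exp (-b * s ^ 2)))
  calc ∫⁻ t in Set.Ioi a, ENNReal.ofReal (Real.exp (-b * t ^ 2))
      ≤ ∫⁻ t in Set.Ioi a, ENNReal.ofReal (Real.exp (-b * a ^ 2)) *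
          ENNReal.ofReal (Real.exp (-b * (t - a) ^ 2)) := setLIntegral_mono (by fun_prop) hpt
    _ = ENNReal.ofReal (Real.exp (-b * a ^ 2)) *
          ∫⁻ s in Set.Ioi 0, ENNReal.ofReal (Real.exp (-b * s ^ 2)) := by
        rw [lintegral_const_mul _ (by fun_prop), hshift]
    _ = ENNReal.ofReal (Real.exp (-b * a ^ 2) * (√(π / b) / 2)) := by
        rw [← ofReal_integral_eq_lintegral_ofReal (integrable_exp_neg_mul_sq hb).integrableOn
          (ae_of_all _ fun s ↦ Real.exp_nonneg _), integral_gaussian_Ioi,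
          ENNReal.ofReal_mul (Real.exp_nonneg _)]

theorem lintegral_lt_abs_exp_neg_mul_sq_le {a b : ℝ} (ha : 0 ≤ a) (hb : 0 < b) :
    ∫⁻ t in {t | a < |t|}, ENNReal.ofReal (Real.exp (-b * t ^ 2)) ≤
      ENNReal.ofReal (Real.exp (-b * a ^ 2) * √(π / b)) := by
  have hset : {t : ℝ | a < |t|} = Set.Ioi a ∪ Neg.neg ⁻¹' Set.Ioi a := by
    ext t
    exact lt_abs (a := a) (b := t)
  have hneg : ∫⁻ t in Neg.neg ⁻¹' Set.Ioi a, ENNReal.ofReal (Real.exp (-b * t ^ 2)) =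
      ∫⁻ t in Set.Ioi a, ENNReal.ofReal (Real.exp (-b * t ^ 2)) := by
    simpa using (Measure.measurePreserving_neg volume).setLIntegral_comp_preimage
      measurableSet_Ioi (by fun_prop : Measurable fun t ↦ ENNReal.ofReal (Real.exp (-b * t ^ 2)))
  calc ∫⁻ t in {t | a < |t|}, ENNReal.ofReal (Real.exp (-b * t ^ 2))
      ≤ (∫⁻ t in Set.Ioi a, ENNReal.ofReal (Real.exp (-b * t ^ 2))) +
          ∫⁻ t in Neg.neg ⁻¹' Set.Ioi a, ENNReal.ofReal (Real.exp (-b * t ^ 2)) :=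
        hset ▸ lintegral_union_le _ _ _
    _ ≤ ENNReal.ofReal (Real.exp (-b * a ^ 2) * (√(π / b) / 2)) +
          ENNReal.ofReal (Real.exp (-b * a ^ 2) * (√(π / b) / 2)) :=
        add_le_add (lintegral_Ioi_exp_neg_mul_sq_le ha hb)
          (hneg.trans_le (lintegral_Ioi_exp_neg_mul_sq_le ha hb))
    _ = ENNReal.ofReal (Real.exp (-b * a ^ 2) * √(π / b)) := by
        rw [← ENNReal.ofReal_add (by positivity) (by positivity), ← mul_add, add_halves]

theorem sqrt_one_sub_sq_pow_le_exp (t : ℝ) (m : ℕ) :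
    √(1 - t ^ 2) ^ m ≤ Real.exp (-(m / 2) * t ^ 2) :=
  calc √(1 - t ^ 2) ^ m ≤ Real.exp (-t ^ 2 / 2) ^ m := by
        rw [Real.exp_half]
        gcongr
        exact Real.one_sub_le_exp_neg _
    _ = Real.exp (-(m / 2) * t ^ 2) := by rw [← Real.exp_nat_mul]; ring_nf

end Gaussian

section BallCap

variable {G : Type*} [NormedAddCommGroup G] [InnerProductSpace ℝ G] [FiniteDimensional ℝ G]
  [MeasurableSpace G] [BorelSpace G] [Nontrivial G]

theorem volume_ball_inter_lt_abs_fst (a : ℝ) :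
    volume (ball 0 1 ∩ {y : WithLp 2 (ℝ × G) | a < |y.fst|}) =
      (∫⁻ t in {t | a < |t|}, ENNReal.ofReal (√(1 - t ^ 2) ^ finrank ℝ G)) *
        volume (ball (0 : G) 1) := by
  let A : Set (ℝ × G) := {p | ‖p.2‖ < √(1 - p.1 ^ 2)} ∩ {p | a < |p.1|}
  have hA : MeasurableSet A := (measurableSet_lt (by fun_prop) (by fun_prop)).inter
    (measurableSet_lt (by fun_prop) (by fun_prop))
  have hpre : ball 0 1 ∩ {y : WithLp 2 (ℝ × G) | a < |y.fst|} = WithLp.ofLp ⁻¹' A := by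
    ext y
    have hball : ‖y‖ < 1 ↔ ‖y.snd‖ < √(1 - y.fst ^ 2) := by
      rw [Real.lt_sqrt (norm_nonneg _), lt_sub_iff_add_lt', ← sq_abs y.fst, ← Real.norm_eq_abs,
        ← WithLp.prod_norm_sq_eq_of_L2, sq_lt_one_iff₀ (norm_nonneg y)]
    simp only [Set.mem_inter_iff, mem_ball_zero_iff, hball]
    rfl
  have hslice (t : ℝ) : volume (Prod.mk t ⁻¹' A) = {t | a < |t|}.indicator
      (fun t ↦ ENNReal.ofReal (√(1 - t ^ 2) ^ finrank ℝ G) * volume (ball (0 : G) 1)) t := by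
    by_cases ht : a < |t|
    · rw [Set.indicator_of_mem (by exact ht),
        ← Measure.addHaar_ball volume (0 : G) (Real.sqrt_nonneg _)]
      congr 1
      ext x
      simp [A, ht]
    · simp [A, ht]
  rw [hpre, (WithLp.volume_preserving_ofLp ℝ G).measure_preimage hA.nullMeasurableSet,
    Measure.volume_eq_prod, Measure.prod_apply hA, lintegral_congr hslice,
    lintegral_indicator (measurableSet_lt (by fun_prop) (by fun_prop)),
    lintegral_mul_const _ (by fun_prop)]

theorem volume_ball_inter_lt_abs_fst_le {a : ℝ} (ha : 0 ≤ a) :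
    volume (ball 0 1 ∩ {y : WithLp 2 (ℝ × G) | a < |y.fst|}) ≤
      ENNReal.ofReal (Real.exp (-(finrank ℝ G / 2) * a ^ 2) * √(π / (finrank ℝ G / 2))) *
        volume (ball (0 : G) 1) := by
  have hm : (0 : ℝ) < finrank ℝ G / 2 := half_pos (Nat.cast_pos.2 finrank_pos)
  rw [volume_ball_inter_lt_abs_fst]
  gcongr
  calc ∫⁻ t in {t | a < |t|}, ENNReal.ofReal (√(1 - t ^ 2) ^ finrank ℝ G)
      ≤ ∫⁻ t in {t | a < |t|}, ENNReal.ofReal (Real.exp (-(finrank ℝ G / 2) * t ^ 2)) :=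
        lintegral_mono fun t ↦ ENNReal.ofReal_le_ofReal (sqrt_one_sub_sq_pow_le_exp t _)
    _ ≤ _ := lintegral_lt_abs_exp_neg_mul_sq_le ha hm

variable (G) in
theorem volume_ball_eq_mul_volume_ball_real_prod :
    volume (ball (0 : G) 1) = ENNReal.ofReal
      (Real.Gamma ((finrank ℝ G + 3) / 2) / Real.Gamma ((finrank ℝ G + 2) / 2) / √π) *
        volume (ball (0 : WithLp 2 (ℝ × G)) 1) := by
  have : Nontrivial (WithLp 2 (ℝ × G)) := (WithLp.equiv 2 (ℝ × G)).nontrivial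
  have hdim : finrank ℝ (WithLp 2 (ℝ × G)) = finrank ℝ G + 1 := by
    rw [(WithLp.linearEquiv 2 ℝ (ℝ × G)).finrank_eq, finrank_prod, finrank_self, add_comm]
  rw [InnerProductSpace.volume_ball, InnerProductSpace.volume_ball, hdim, ENNReal.ofReal_one,
    one_pow, one_mul, one_pow, one_mul, ← ENNReal.ofReal_mul (by positivity), Nat.cast_add_one,
    show ((finrank ℝ G : ℝ) + 1) / 2 + 1 = (finrank ℝ G + 3) / 2 by ring,
    show (finrank ℝ G : ℝ) / 2 + 1 = (finrank ℝ G + 2) / 2 by ring, pow_succ]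
  congr 1
  field_simp

theorem cond_ball_lt_abs_fst_le {a : ℝ} (ha : 0 ≤ a) :
    volume[|ball (0 : WithLp 2 (ℝ × G)) 1] {y | a < |y.fst|} ≤
      ENNReal.ofReal (Real.Gamma ((finrank ℝ G + 3) / 2) / Real.Gamma ((finrank ℝ G + 2) / 2) *
        √(2 / finrank ℝ G) * Real.exp (-finrank ℝ G * a ^ 2 / 2)) := by
  rw [cond_apply measurableSet_ball, mul_comm, ← div_eq_mul_inv]
  refine ENNReal.div_le_of_le_mul ((volume_ball_inter_lt_abs_fst_le ha).trans_eq ?_)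
  rw [volume_ball_eq_mul_volume_ball_real_prod G, ← mul_assoc,
    ← ENNReal.ofReal_mul (by positivity)]
  congr 2
  rw [show π / (finrank ℝ G / 2) = π * (2 / finrank ℝ G) by field_simp,
    Real.sqrt_mul Real.pi_nonneg]
  field_simp

end BallCap

theorem stmt8_general {E : Type*} [NormedAddCommGroup E] [InnerProductSpace ℝ E]
    [FiniteDimensional ℝ E] [MeasurableSpace E] [BorelSpace E] {μ : Measure E}
    [IsProbabilityMeasure μ] (hμ : ∀ T : E ≃ₗᵢ[ℝ] E, μ.map T = μ) (hμ₀ : μ {0} = 0)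
    (hE : 4 ≤ finrank ℝ E) {u : E} (hu : ‖u‖ = 1) {a : ℝ} (ha : 0 ≤ a) :
    μ {s | a * ‖s‖ < |⟪s, u⟫|} ≤
      ENNReal.ofReal (Real.Gamma ((finrank ℝ E : ℝ) / 2) / Real.Gamma ((finrank ℝ E - 1) / 2) *
        √(2 / (finrank ℝ E - 3)) * Real.exp (-(finrank ℝ E - 3) * a ^ 2 / 2)) := by
  obtain ⟨m, hm⟩ : ∃ m, finrank ℝ E = m + 1 + 3 := Nat.exists_eq_add_of_le' hE
  let G := EuclideanSpace ℝ (Fin (m + 1))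
  have hG : finrank ℝ G = m + 1 := finrank_euclideanSpace_fin
  let e : WithLp 2 (ℝ × G) := WithLp.toLp 2 (1, 0)
  have he : ‖e‖ = 1 := by simp [e]
  have hdim : finrank ℝ E = finrank ℝ (WithLp 2 (ℝ × G)) + 2 := by
    rw [(WithLp.linearEquiv 2 ℝ (ℝ × G)).finrank_eq, finrank_prod, finrank_self, hG, hm]
    ring
  have hmeas : MeasurableSet {t : ℝ | a < |t|} := measurableSet_lt (by fun_prop) (by fun_prop)
  calc μ {s | a * ‖s‖ < |⟪s, u⟫|} ≤ μ {s | a < |Real.cos (angle u s)|} := by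
        refine measure_mono fun s hs ↦ ?_
        have hs₀ : 0 < ‖s‖ := norm_pos_iff.2 fun h ↦ by simp [h] at hs
        rwa [Set.mem_ofPred_eq, cos_angle, hu, one_mul, abs_div, abs_norm, lt_div_iff₀ hs₀,
          real_inner_comm]
    _ = μ.map (fun s ↦ Real.cos (angle u s)) {t | a < |t|} :=
        (Measure.map_apply (Real.measurable_cos.comp (measurable_angle u)) hmeas).symm
    _ = volume[|ball (0 : WithLp 2 (ℝ × G)) 1] {y | a < |y.fst|} := by
        rw [map_cos_angle_eq_map_inner_cond_ball hμ hμ₀ hdim hu he,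
          Measure.map_apply (by fun_prop) hmeas]
        simp [e]
    _ ≤ _ := (cond_ball_lt_abs_fst_le ha).trans_eq (by rw [hG, hm]; push_cast; ring_nf)

namespace IsUniformSphere

variable {n : ℕ} {μ : Measure (EuclideanSpace ℝ (Fin n))}

theorem ae_norm_eq {r : ℝ} (hμ : IsUniformSphere n r μ) : ∀ᵐ s ∂μ, ‖s‖ = r :=
  (ae_iff.2 hμ.2.1 : ∀ᵐ s ∂μ, s ∈ sphere 0 r).mono fun _ ↦ mem_sphere_zero_iff_norm.1

theorem measure_singleton_zero {r : ℝ} (hr : r ≠ 0) (hμ : IsUniformSphere n r μ) : μ {0} = 0 :=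
  measure_eq_zero_iff_ae_notMem.2 <| hμ.ae_norm_eq.mono fun _ hs hs₀ ↦
    hr (by rw [← hs, Set.mem_singleton_iff.1 hs₀, norm_zero])

end IsUniformSphere

/-- Tail bound for the projection of a uniform point on the sphere: for `n ≥ 4`, a unit
vector `u ∈ ℝⁿ`, `s` uniform on the unit sphere `S^{n-1}`, and `a ∈ (0,1)`,
`P[|⟨s, u⟩| > a] ≤ (Γ(n/2)/Γ((n-1)/2)) √(2/(n-3)) exp(-(n-3)a²/2)`. -/
theorem stmt8 (n : ℕ) (hn : 4 ≤ n) (u : EuclideanSpace ℝ (Fin n)) (hu : ‖u‖ = 1)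
    (μ : Measure (EuclideanSpace ℝ (Fin n))) (hμ : IsUniformSphere n 1 μ)
    (a : ℝ) (ha : a ∈ Set.Ioo (0 : ℝ) 1) :
    μ {s | a < |⟪s, u⟫|} ≤
      ENNReal.ofReal ((Real.Gamma ((n : ℝ) / 2) / Real.Gamma (((n : ℝ) - 1) / 2)) *
        Real.sqrt (2 / ((n : ℝ) - 3)) * Real.exp (-((n : ℝ) - 3) * a ^ 2 / 2)) := by
  have := hμ.1
  calc μ {s | a < |⟪s, u⟫|} ≤ μ {s | a * ‖s‖ < |⟪s, u⟫|} :=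
        measure_mono_ae <| hμ.ae_norm_eq.mono fun s hs h ↦
          (by rwa [hs, mul_one] : a * ‖s‖ < |⟪s, u⟫|)
    _ ≤ _ := by
        simpa using stmt8_general hμ.2.2 (hμ.measure_singleton_zero one_ne_zero) (by simpa) hu
          ha.1.le
end
end

section
/- For each n ≥ 2 let u_n and v_n be orthonormal vectors in ℝⁿ, and let s_n be uniformly distributed on the hemisphere {s ∈ S^{n-1} : ⟨s, u_n⟩ ≥ 0}. Then the pair of random variables (√n·⟨s_n, u_n⟩, √n·⟨s_n, v_n⟩) converges in distribution, as n → ∞, to (|N₁|, N₂), where N₁ and N₂ are independent standard normal random variables. -/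
open MeasureTheory ProbabilityTheory Filter
open scoped Topology RealInnerProductSpace

noncomputable section

/-- `μ` is the uniform distribution on the hemisphere `{x ∈ ℝⁿ : ‖x‖ = r, ⟨x, u⟩ ≥ 0}`:
the uniform measure on the sphere of radius `r` conditioned on `⟨x, u⟩ ≥ 0`. -/
def IsUniformHemisphere (n : ℕ) (r : ℝ) (u : EuclideanSpace ℝ (Fin n))
    (μ : Measure (EuclideanSpace ℝ (Fin n))) : Prop :=
  ∃ ν : Measure (EuclideanSpace ℝ (Fin n)),
    IsUniformSphere n r ν ∧ μ = ν[|{x | 0 ≤ ⟪x, u⟫}]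

/-!
If `g` is a standard Gaussian vector in dimension `d` and `s` is an independent uniform point of the
unit sphere, then `‖g‖ • s` is standard Gaussian. Since `‖g‖` differs from `√d` by `O(1)` in mean
while `⟪s, x⟫` has size `‖x‖ / √d`, replacing the radius `‖g‖` by `√d` changes the characteristic
function by `O(1 / √d)`, so by Lévy's continuity theorem `√d * ⟪s, u⟫` and `√d * ⟪s, v⟫` converge
jointly to independent standard normals. Restricting `s` to a hemisphere conditions this pair on a
half-plane whose boundary is null for the limit; conditioning on such a set preserves weak
convergence, and a standard normal conditioned on being nonnegative has the law of its absolute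
value.
-/

section Conditioning

variable {Ω Ω' ι : Type*} [MeasurableSpace Ω] [MeasurableSpace Ω']

lemma cond_map {μ : Measure Ω} {X : Ω → Ω'} (hX : Measurable X) {S : Set Ω'}
    (hS : MeasurableSet S) : (μ.map X)[|S] = (μ[|X ⁻¹' S]).map X := by
  rw [ProbabilityTheory.cond, ProbabilityTheory.cond, Measure.map_smul,
    Measure.restrict_map hX hS, Measure.map_apply hX hS]

lemma cond_prod_univ {μ : Measure Ω} [SFinite μ] {ν : Measure Ω'} [IsProbabilityMeasure ν]
    (S : Set Ω) : (μ.prod ν)[|S ×ˢ Set.univ] = (μ[|S]).prod ν := by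
  rw [ProbabilityTheory.cond, ProbabilityTheory.cond, ← Measure.prod_restrict,
    Measure.restrict_univ, Measure.prod_smul_left, Measure.prod_prod, measure_univ, mul_one]

variable [TopologicalSpace Ω] [OpensMeasurableSpace Ω] [HasOuterApproxClosed Ω] {L : Filter ι}
  {P : ι → ProbabilityMeasure Ω} {Q : ProbabilityMeasure Ω} {S : Set Ω}

lemma cond_le_liminf_cond_of_isOpen (hPQ : Tendsto P L (𝓝 Q)) (hS : MeasurableSet S)
    (hfr : (Q : Measure Ω) (frontier S) = 0) {G : Set Ω} (hG : IsOpen G) :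
    (Q : Measure Ω)[|S] G ≤ L.liminf fun i => (P i : Measure Ω)[|S] G := by
  obtain rfl | _ := L.eq_or_neBot
  · simp
  have hinv : Tendsto (fun i => ((P i : Measure Ω) S)⁻¹) L (𝓝 ((Q : Measure Ω) S)⁻¹) :=
    (ProbabilityMeasure.tendsto_measure_of_null_frontier_of_tendsto' hPQ hfr).inv
  calc (Q : Measure Ω)[|S] G
      = ((Q : Measure Ω) S)⁻¹ * (Q : Measure Ω) (interior S ∩ G) := by
        rw [cond_apply hS]
        congr 1
        exact measure_congr ((interior_ae_eq_of_null_frontier hfr).symm.inter (ae_eq_refl G))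
    _ ≤ (L.liminf fun i => ((P i : Measure Ω) S)⁻¹) *
          L.liminf fun i => (P i : Measure Ω) (interior S ∩ G) :=
        mul_le_mul' hinv.liminf_eq.ge
          (ProbabilityMeasure.le_liminf_measure_open_of_tendsto hPQ (isOpen_interior.inter hG))
    _ ≤ L.liminf fun i => ((P i : Measure Ω) S)⁻¹ * (P i : Measure Ω) (interior S ∩ G) :=
        ENNReal.le_liminf_mul
    _ ≤ L.liminf fun i => (P i : Measure Ω)[|S] G := by
        refine liminf_le_liminf (.of_forall fun i => ?_)
        rw [cond_apply hS]
        gcongr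
        exact interior_subset

theorem tendsto_integral_cond [L.IsCountablyGenerated] (hPQ : Tendsto P L (𝓝 Q))
    (hS : MeasurableSet S) (hfr : (Q : Measure Ω) (frontier S) = 0) (hQS : (Q : Measure Ω) S ≠ 0)
    (f : BoundedContinuousFunction Ω ℝ) :
    Tendsto (fun i => ∫ x, f x ∂(P i : Measure Ω)[|S]) L (𝓝 (∫ x, f x ∂(Q : Measure Ω)[|S])) := by
  classical
  have hpos : ∀ᶠ i in L, (P i : Measure Ω) S ≠ 0 :=
    (ProbabilityMeasure.tendsto_measure_of_null_frontier_of_tendsto' hPQ hfr).eventually_ne hQS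
  let condS (R : ProbabilityMeasure Ω) : ProbabilityMeasure Ω :=
    if hR : (R : Measure Ω) S ≠ 0 then ⟨(R : Measure Ω)[|S], cond_isProbabilityMeasure hR⟩ else Q
  have coe_condS {R : ProbabilityMeasure Ω} (hR : (R : Measure Ω) S ≠ 0) :
      (condS R : Measure Ω) = (R : Measure Ω)[|S] :=
    congrArg ProbabilityMeasure.toMeasure (dif_pos hR)
  have hlim : Tendsto (fun i => condS (P i)) L (𝓝 (condS Q)) := by
    refine tendsto_of_forall_isOpen_le_liminf' fun G hG => ?_
    rw [coe_condS hQS]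
    refine (cond_le_liminf_cond_of_isOpen hPQ hS hfr hG).trans_eq (liminf_congr ?_)
    filter_upwards [hpos] with i hi using by rw [coe_condS hi]
  rw [← coe_condS hQS]
  refine (ProbabilityMeasure.tendsto_iff_forall_integral_tendsto.1 hlim f).congr' ?_
  filter_upwards [hpos] with i hi using by rw [coe_condS hi]

end Conditioning

section SymmetricMeasure

variable {μ : Measure ℝ} [NullSingletonClass μ]

lemma map_abs_eq_two_smul_restrict_Ici (hμ : μ.map Neg.neg = μ) :
    μ.map (fun x => |x|) = (2 : ENNReal) • μ.restrict (Set.Ici 0) := by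
  refine Measure.ext fun B hB => ?_
  have hneg : μ ((fun x => |x|) ⁻¹' B \ Set.Ici 0) = μ (B ∩ Set.Ici 0) := by
    conv_lhs => rw [← hμ]
    rw [Measure.map_apply measurable_neg ((measurable_abs hB).diff measurableSet_Ici),
      ← measure_congr ((ae_eq_refl B).inter Ioi_ae_eq_Ici)]
    congr 1
    ext x
    simp +contextual [abs_of_pos, and_congr_left_iff]
  have hpos : (fun x => |x|) ⁻¹' B ∩ Set.Ici 0 = B ∩ Set.Ici 0 := by
    ext x
    simp +contextual [abs_of_nonneg, and_congr_left_iff]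
  rw [Measure.map_apply measurable_abs hB, ← measure_inter_add_sdiff _ measurableSet_Ici, hneg,
    hpos, Measure.smul_apply, Measure.restrict_apply hB, smul_eq_mul, two_mul]

lemma measure_Ici_zero_eq_inv_two [IsProbabilityMeasure μ] (hμ : μ.map Neg.neg = μ) :
    μ (Set.Ici 0) = 2⁻¹ := by
  have := Measure.isProbabilityMeasure_map (μ := μ) measurable_abs.aemeasurable
  have h : μ.map (fun x => |x|) Set.univ = 1 := measure_univ
  rw [map_abs_eq_two_smul_restrict_Ici hμ, Measure.smul_apply, Measure.restrict_apply_univ,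
    smul_eq_mul, mul_comm] at h
  exact ENNReal.eq_inv_of_mul_eq_one_left h

lemma cond_Ici_zero_eq_map_abs [IsProbabilityMeasure μ] (hμ : μ.map Neg.neg = μ) :
    μ[|Set.Ici 0] = μ.map (fun x => |x|) := by
  rw [ProbabilityTheory.cond, measure_Ici_zero_eq_inv_two hμ, inv_inv,
    map_abs_eq_two_smul_restrict_Ici hμ]

end SymmetricMeasure

lemma integral_abs_le_sqrt_integral_sq {Ω : Type*} [MeasurableSpace Ω] {μ : Measure Ω}
    [IsProbabilityMeasure μ] {X : Ω → ℝ} (hX : MemLp X 2 μ) :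
    ∫ ω, |X ω| ∂μ ≤ √(∫ ω, X ω ^ 2 ∂μ) := by
  refine Real.le_sqrt_of_sq_le (sub_nonneg.1 ?_)
  have h : Var[fun ω => |X ω|; μ] = _ := variance_eq_sub hX.abs
  simp only [Pi.pow_apply, sq_abs] at h
  exact h ▸ variance_nonneg _ μ

lemma norm_exp_mul_I_sub_exp_mul_I_le (a b : ℝ) :
    ‖Complex.exp (a * Complex.I) - Complex.exp (b * Complex.I)‖ ≤ |a - b| := by
  have h : Complex.exp (a * Complex.I) - Complex.exp (b * Complex.I) =
      Complex.exp (b * Complex.I) * (Complex.exp (Complex.I * (a - b : ℝ)) - 1) := by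
    rw [mul_sub, ← Complex.exp_add]
    push_cast
    ring_nf
  rw [h, norm_mul, Complex.norm_exp_ofReal_mul_I, one_mul]
  exact Real.norm_exp_I_mul_ofReal_sub_one_le

lemma norm_charFun_sub_charFun_le {E : Type*} [NormedAddCommGroup E] [InnerProductSpace ℝ E]
    [MeasurableSpace E] [BorelSpace E] [SecondCountableTopology E] {ν : Measure E}
    [IsFiniteMeasure ν] (hint : Integrable id ν) (x y : E) :
    ‖charFun ν x - charFun ν y‖ ≤ ∫ s, |⟪s, x - y⟫| ∂ν := by
  have hexp (z : E) : Integrable (fun s => Complex.exp (⟪s, z⟫ * Complex.I)) ν :=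
    Integrable.of_bound (C := 1) (by fun_prop) (by simp [Complex.norm_exp_ofReal_mul_I])
  rw [charFun_apply, charFun_apply, ← integral_sub (hexp x) (hexp y)]
  refine norm_integral_le_of_norm_le (hint.inner_const _).abs (.of_forall fun s => ?_)
  rw [inner_sub_right]
  exact norm_exp_mul_I_sub_exp_mul_I_le _ _

section GaussianNorm

lemma integral_sq_gaussianReal : ∫ x, x ^ 2 ∂(gaussianReal 0 1) = 1 := by
  have h := variance_fun_id_gaussianReal (μ := 0) (v := 1)
  rw [variance_eq_integral (by fun_prop)] at h
  simpa using h

lemma memLp_sq_gaussianReal : MemLp (fun x : ℝ => x ^ 2) 2 (gaussianReal 0 1) := by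
  rw [memLp_two_iff_integrable_sq (by fun_prop)]
  simpa [← pow_mul, Even.pow_abs (show Even 4 by decide)] using
    (memLp_id_gaussianReal (μ := 0) (v := 1) 4).integrable_norm_pow'

lemma sqrt_mul_abs_sub_sqrt_le {a r : ℝ} (ha : 0 ≤ a) (hr : 0 ≤ r) :
    √a * |r - √a| ≤ |r ^ 2 - a| := by
  have h : r ^ 2 - a = (r + √a) * (r - √a) := by rw [← sq_sub_sq, Real.sq_sqrt ha]
  rw [h, abs_mul, abs_of_nonneg (by positivity : 0 ≤ r + √a)]
  gcongr
  exact le_add_of_nonneg_left hr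

variable (E : Type*) [NormedAddCommGroup E] [InnerProductSpace ℝ E] [FiniteDimensional ℝ E]
  [MeasurableSpace E] [BorelSpace E]

lemma identDistrib_norm_sq_stdGaussian :
    IdentDistrib (fun x => ‖x‖ ^ 2) (fun x => ∑ i, x i ^ 2) (stdGaussian E)
      (.pi fun _ : Fin (Module.finrank ℝ E) => gaussianReal 0 1) where
  aemeasurable_fst := by fun_prop
  aemeasurable_snd := Measurable.aemeasurable (by fun_prop)
  map_eq := by
    rw [stdGaussian, Measure.map_map (by fun_prop) (by fun_prop)]
    congr with x
    simp [← (stdOrthonormalBasis ℝ E).sum_sq_inner_right, inner_sum, inner_smul_right,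
      orthonormal_iff_ite.1 (stdOrthonormalBasis ℝ E).orthonormal]

lemma integral_norm_sq_stdGaussian : ∫ x, ‖x‖ ^ 2 ∂(stdGaussian E) = Module.finrank ℝ E := by
  have hcoord (i : Fin (Module.finrank ℝ E)) :
      ∫ x, x i ^ 2 ∂(Measure.pi fun _ : Fin (Module.finrank ℝ E) => gaussianReal 0 1) = 1 :=
    (integral_comp_eval (μ := fun _ => gaussianReal 0 1) (i := i) (f := fun x : ℝ => x ^ 2)
      (by fun_prop)).trans integral_sq_gaussianReal
  rw [(identDistrib_norm_sq_stdGaussian E).integral_eq, integral_finsetSum _ fun i _ =>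
    integrable_comp_eval (μ := fun _ => gaussianReal 0 1) (i := i) (f := fun x : ℝ => x ^ 2)
      (memLp_sq_gaussianReal.integrable one_le_two)]
  simp [hcoord]

lemma variance_norm_sq_stdGaussian :
    Var[fun x => ‖x‖ ^ 2; stdGaussian E] =
      Module.finrank ℝ E * Var[fun x => x ^ 2; gaussianReal 0 1] := by
  have h := variance_sum_pi (ι := Fin (Module.finrank ℝ E)) fun _ => memLp_sq_gaussianReal
  rw [(identDistrib_norm_sq_stdGaussian E).variance_eq]
  simpa [Finset.sum_fn] using h

lemma memLp_norm_sq_stdGaussian : MemLp (fun x => ‖x‖ ^ 2) 2 (stdGaussian E) := by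
  rw [memLp_two_iff_integrable_sq (by fun_prop)]
  simpa [← pow_mul] using (IsGaussian.memLp_id (stdGaussian E) 4 (by simp)).integrable_norm_pow'

lemma integral_abs_norm_sub_sqrt_finrank_le [Nontrivial E] :
    ∫ x, |‖x‖ - √(Module.finrank ℝ E)| ∂(stdGaussian E) ≤
      √Var[fun x => x ^ 2; gaussianReal 0 1] := by
  have hd : 0 < √(Module.finrank ℝ E : ℝ) := by simp [Module.finrank_pos]
  have hL : MemLp (fun x => ‖x‖ ^ 2 - Module.finrank ℝ E) 2 (stdGaussian E) :=
    (memLp_norm_sq_stdGaussian E).sub (memLp_const _)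
  refine le_of_mul_le_mul_left ?_ hd
  calc √(Module.finrank ℝ E) * ∫ x, |‖x‖ - √(Module.finrank ℝ E)| ∂(stdGaussian E)
      = ∫ x, √(Module.finrank ℝ E) * |‖x‖ - √(Module.finrank ℝ E)| ∂(stdGaussian E) :=
        (integral_const_mul _ _).symm
    _ ≤ ∫ x, |‖x‖ ^ 2 - Module.finrank ℝ E| ∂(stdGaussian E) :=
        integral_mono_of_nonneg (.of_forall fun x => by positivity)
          (hL.integrable one_le_two).abs
          (.of_forall fun x => sqrt_mul_abs_sub_sqrt_le (Nat.cast_nonneg _) (norm_nonneg x))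
    _ ≤ √(∫ x, (‖x‖ ^ 2 - Module.finrank ℝ E) ^ 2 ∂(stdGaussian E)) :=
        integral_abs_le_sqrt_integral_sq hL
    _ = √(Module.finrank ℝ E) * √Var[fun x => x ^ 2; gaussianReal 0 1] := by
        rw [← Real.sqrt_mul (Nat.cast_nonneg _), ← variance_norm_sq_stdGaussian,
          variance_eq_integral (by fun_prop), integral_norm_sq_stdGaussian]

end GaussianNorm

section NormEqOne

variable {E : Type*} [NormedAddCommGroup E] [MeasurableSpace E] {ν : Measure E}

lemma nontrivial_of_ae_norm_eq_one [NeZero ν] (hs : ∀ᵐ s ∂ν, ‖s‖ = 1) : Nontrivial E := by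
  obtain ⟨s, h⟩ := hs.exists
  exact ⟨s, 0, by rintro rfl; simp at h⟩

variable [BorelSpace E] [SecondCountableTopology E]

lemma memLp_id_of_ae_norm_eq_one [IsFiniteMeasure ν] (hs : ∀ᵐ s ∂ν, ‖s‖ = 1) (p : ENNReal) :
    MemLp id p ν :=
  .of_bound (by fun_prop) 1 (hs.mono fun _ h => h.le)

end NormEqOne

/-- Invariance of a measure under all linear isometries. For a probability measure carried by the
unit sphere of a finite-dimensional space this singles out the uniform distribution on the sphere,
so that the results below are stated without reference to surface measure. -/
def IsRotationInvariant {E : Type*} [NormedAddCommGroup E] [InnerProductSpace ℝ E]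
    [MeasurableSpace E] (ν : Measure E) : Prop :=
  ∀ T : E ≃ₗᵢ[ℝ] E, ν.map T = ν

section RotationInvariance

variable {E : Type*} [NormedAddCommGroup E] [InnerProductSpace ℝ E] [MeasurableSpace E]
  [BorelSpace E] {ν : Measure E} {x y : E}

lemma IsRotationInvariant.map_inner_eq (hν : IsRotationInvariant ν) (h : ‖x‖ = ‖y‖) :
    ν.map (fun s => ⟪s, x⟫) = ν.map (fun s => ⟪s, y⟫) := by
  set T := (ℝ ∙ (x - y))ᗮ.reflection
  have hT : T x = y := Submodule.reflection_sub h
  calc ν.map (fun s => ⟪s, x⟫) = ν.map ((fun s => ⟪s, y⟫) ∘ T) := by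
        congr with s
        rw [Function.comp_apply, ← hT, T.inner_map_map]
    _ = ν.map (fun s => ⟪s, y⟫) := by
        rw [← Measure.map_map (by fun_prop) T.continuous.measurable, hν T]

lemma IsRotationInvariant.charFun_eq (hν : IsRotationInvariant ν) (h : ‖x‖ = ‖y‖) :
    charFun ν x = charFun ν y := by
  have hmap (z : E) : charFun ν z = ∫ r, Complex.exp (r * Complex.I) ∂(ν.map fun s => ⟪s, z⟫) := by
    rw [charFun_apply, integral_map (by fun_prop) (by fun_prop)]
  rw [hmap, hmap, hν.map_inner_eq h]

lemma IsRotationInvariant.integral_inner_sq_eq (hν : IsRotationInvariant ν) (h : ‖x‖ = ‖y‖) :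
    ∫ s, ⟪s, x⟫ ^ 2 ∂ν = ∫ s, ⟪s, y⟫ ^ 2 ∂ν := by
  have hmap (z : E) : ∫ s, ⟪s, z⟫ ^ 2 ∂ν = ∫ r, r ^ 2 ∂(ν.map fun s => ⟪s, z⟫) := by
    rw [integral_map (by fun_prop) (by fun_prop)]
  rw [hmap, hmap, hν.map_inner_eq h]

variable [FiniteDimensional ℝ E]

lemma IsRotationInvariant.finrank_mul_integral_inner_sq (hν : IsRotationInvariant ν)
    (hmem : MemLp id 2 ν) (x : E) :
    Module.finrank ℝ E * ∫ s, ⟪s, x⟫ ^ 2 ∂ν = ‖x‖ ^ 2 * ∫ s, ‖s‖ ^ 2 ∂ν := by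
  let b := stdOrthonormalBasis ℝ E
  have hcoord (i : Fin (Module.finrank ℝ E)) :
      ∫ s, ⟪s, x⟫ ^ 2 ∂ν = ‖x‖ ^ 2 * ∫ s, ⟪s, b i⟫ ^ 2 ∂ν := by
    rw [hν.integral_inner_sq_eq (y := ‖x‖ • b i) (by simp [norm_smul]), ← integral_const_mul]
    simp_rw [inner_smul_right, mul_pow]
  have hint (i : Fin (Module.finrank ℝ E)) : Integrable (fun s => ⟪s, b i⟫ ^ 2) ν :=
    (hmem.inner_const (b i)).integrable_sq
  calc Module.finrank ℝ E * ∫ s, ⟪s, x⟫ ^ 2 ∂ν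
      = ∑ i, ‖x‖ ^ 2 * ∫ s, ⟪s, b i⟫ ^ 2 ∂ν := by simp [← hcoord]
    _ = ‖x‖ ^ 2 * ∫ s, ‖s‖ ^ 2 ∂ν := by
        simp_rw [← Finset.mul_sum, ← integral_finsetSum _ fun i _ => hint i,
          b.sum_sq_inner_left]

variable [IsProbabilityMeasure ν]

lemma IsRotationInvariant.integral_abs_inner_le (hν : IsRotationInvariant ν)
    (hs : ∀ᵐ s ∂ν, ‖s‖ = 1) (x : E) :
    ∫ s, |⟪s, x⟫| ∂ν ≤ ‖x‖ / √(Module.finrank ℝ E) := by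
  have hmem := memLp_id_of_ae_norm_eq_one hs 2
  have := nontrivial_of_ae_norm_eq_one hs
  have hd : (0 : ℝ) < Module.finrank ℝ E := Nat.cast_pos.2 Module.finrank_pos
  have hone : ∫ s, ‖s‖ ^ 2 ∂ν = 1 := by
    rw [integral_congr_ae (hs.mono fun s h => by rw [h, one_pow])]
    simp
  have hsq := hν.finrank_mul_integral_inner_sq hmem x
  rw [hone, mul_one, mul_comm, ← eq_div_iff hd.ne'] at hsq
  calc ∫ s, |⟪s, x⟫| ∂ν ≤ √(∫ s, ⟪s, x⟫ ^ 2 ∂ν) :=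
        integral_abs_le_sqrt_integral_sq (hmem.inner_const x)
    _ = ‖x‖ / √(Module.finrank ℝ E) := by
        rw [hsq, Real.sqrt_div (sq_nonneg _), Real.sqrt_sq (norm_nonneg _)]

-- As `charFun ν` is radial, `g` and `x` may be exchanged up to their norms; integrating over `g`
-- first then leaves a function of `‖s‖` only.
lemma IsRotationInvariant.integral_charFun_norm_smul (hν : IsRotationInvariant ν)
    (hs : ∀ᵐ s ∂ν, ‖s‖ = 1) (x : E) :
    ∫ g, charFun ν (‖g‖ • x) ∂(stdGaussian E) = charFun (stdGaussian E) x := by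
  calc ∫ g, charFun ν (‖g‖ • x) ∂(stdGaussian E)
      = ∫ g, ∫ s, Complex.exp (⟪s, ‖x‖ • g⟫ * Complex.I) ∂ν ∂(stdGaussian E) := by
        congr with g
        rw [← charFun_apply]
        exact hν.charFun_eq (by simp [norm_smul, mul_comm])
    _ = ∫ s, ∫ g, Complex.exp (⟪s, ‖x‖ • g⟫ * Complex.I) ∂(stdGaussian E) ∂ν :=
        integral_integral_swap <| Integrable.of_bound (C := 1)
          (Continuous.aestronglyMeasurable (by fun_prop))
          (by simp [Function.uncurry_def, Complex.norm_exp_ofReal_mul_I])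
    _ = ∫ s, charFun (stdGaussian E) (‖x‖ • s) ∂ν := by
        simp_rw [charFun_apply, inner_smul_right, real_inner_comm]
    _ = ∫ _, charFun (stdGaussian E) x ∂ν := by
        refine integral_congr_ae (hs.mono fun s h => ?_)
        simp [charFun_stdGaussian, norm_smul, h]
    _ = charFun (stdGaussian E) x := by simp

theorem IsRotationInvariant.norm_charFun_sqrt_finrank_smul_sub_le (hν : IsRotationInvariant ν)
    (hs : ∀ᵐ s ∂ν, ‖s‖ = 1) (x : E) :
    ‖charFun ν (√(Module.finrank ℝ E) • x) - charFun (stdGaussian E) x‖ ≤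
      √Var[fun x => x ^ 2; gaussianReal 0 1] * ‖x‖ / √(Module.finrank ℝ E) := by
  set d := Module.finrank ℝ E
  have := nontrivial_of_ae_norm_eq_one hs
  have hint : Integrable (fun g => charFun ν (‖g‖ • x)) (stdGaussian E) :=
    Integrable.of_bound (C := 1) (by fun_prop) (.of_forall fun g => norm_charFun_le_one _)
  have hbound (g : E) :
      ‖charFun ν (√d • x) - charFun ν (‖g‖ • x)‖ ≤ |‖g‖ - √d| * (‖x‖ / √d) :=
    calc ‖charFun ν (√d • x) - charFun ν (‖g‖ • x)‖
        ≤ ∫ s, |⟪s, √d • x - ‖g‖ • x⟫| ∂ν :=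
          norm_charFun_sub_charFun_le
            ((memLp_id_of_ae_norm_eq_one hs 1).integrable le_rfl) _ _
      _ ≤ ‖√d • x - ‖g‖ • x‖ / √d := hν.integral_abs_inner_le hs _
      _ = |‖g‖ - √d| * (‖x‖ / √d) := by
          rw [← sub_smul, norm_smul, Real.norm_eq_abs, abs_sub_comm, mul_div_assoc]
  have habs : Integrable (fun g => |‖g‖ - √d|) (stdGaussian E) :=
    (IsGaussian.integrable_id.norm.sub (integrable_const _)).abs
  calc ‖charFun ν (√d • x) - charFun (stdGaussian E) x‖
      = ‖∫ g, (charFun ν (√d • x) - charFun ν (‖g‖ • x)) ∂(stdGaussian E)‖ := by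
        rw [integral_sub (integrable_const _) hint, hν.integral_charFun_norm_smul hs]
        simp
    _ ≤ ∫ g, |‖g‖ - √d| * (‖x‖ / √d) ∂(stdGaussian E) :=
        norm_integral_le_of_norm_le (habs.mul_const _) (.of_forall hbound)
    _ ≤ √Var[fun x => x ^ 2; gaussianReal 0 1] * ‖x‖ / √d := by
        rw [integral_mul_const, mul_div_assoc]
        gcongr
        exact integral_abs_norm_sub_sqrt_finrank_le E

end RotationInvariance

lemma charFun_map_toLp_mul_inner {E ι : Type*} [NormedAddCommGroup E] [InnerProductSpace ℝ E]
    [MeasurableSpace E] [BorelSpace E] [Fintype ι] (ν : Measure E) (e : ι → E) (c : ℝ)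
    (t : EuclideanSpace ℝ ι) :
    charFun (ν.map fun s => WithLp.toLp 2 fun i => c * ⟪s, e i⟫) t =
      charFun ν (c • ∑ i, t i • e i) := by
  rw [charFun_apply, integral_map (Measurable.aemeasurable (by fun_prop)) (by fun_prop),
    charFun_apply]
  simp_rw [PiLp.inner_apply, inner_smul_right, inner_sum, inner_smul_right, Finset.mul_sum]
  congr with s
  simp [mul_assoc, mul_comm]

lemma norm_sum_smul_eq_norm_of_orthonormal {E ι : Type*} [NormedAddCommGroup E]
    [InnerProductSpace ℝ E] [Fintype ι] {e : ι → E} (he : Orthonormal ℝ e)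
    (t : EuclideanSpace ℝ ι) : ‖∑ i, t i • e i‖ = ‖t‖ := by
  rw [EuclideanSpace.norm_eq, @norm_eq_sqrt_real_inner E, he.inner_sum]
  simp [sq]

lemma map_prodMk_stdGaussian_finTwo :
    (stdGaussian (EuclideanSpace ℝ (Fin 2))).map (fun x => (x 0, x 1)) =
      (gaussianReal 0 1).prod (gaussianReal 0 1) := by
  rw [← map_pi_eq_stdGaussian, Measure.map_map (by fun_prop) (by fun_prop)]
  exact (measurePreserving_finTwoArrow _).map_eq

section HighDimension

variable {E : ℕ → Type*} [∀ n, NormedAddCommGroup (E n)] [∀ n, InnerProductSpace ℝ (E n)]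
  [∀ n, FiniteDimensional ℝ (E n)] [∀ n, MeasurableSpace (E n)] [∀ n, BorelSpace (E n)]
  {ν : ∀ n, Measure (E n)} [∀ n, IsProbabilityMeasure (ν n)]

theorem tendstoInDistribution_sqrt_finrank_mul_inner
    (hE : Tendsto (fun n => Module.finrank ℝ (E n)) atTop atTop)
    (hν : ∀ n, IsRotationInvariant (ν n)) (hs : ∀ n, ∀ᵐ s ∂(ν n), ‖s‖ = 1)
    {ι : Type*} [Fintype ι] {e : ∀ n, ι → E n} (he : ∀ n, Orthonormal ℝ (e n)) :
    TendstoInDistribution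
      (fun n s => WithLp.toLp 2 fun i => √(Module.finrank ℝ (E n)) * ⟪s, e n i⟫) atTop id ν
      (stdGaussian (EuclideanSpace ℝ ι)) where
  forall_aemeasurable n := Measurable.aemeasurable (by fun_prop)
  tendsto := by
    refine ProbabilityMeasure.tendsto_of_tendsto_charFun fun t => ?_
    have hrate : Tendsto (fun n => √Var[fun x => x ^ 2; gaussianReal 0 1] * ‖t‖ /
        √(Module.finrank ℝ (E n))) atTop (𝓝 0) :=
      .const_div_atTop (Real.tendsto_sqrt_atTop.comp (tendsto_natCast_atTop_atTop.comp hE)) _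
    refine tendsto_iff_norm_sub_tendsto_zero.2 (squeeze_zero (fun _ => norm_nonneg _)
      (fun n => ?_) hrate)
    have h := (hν n).norm_charFun_sqrt_finrank_smul_sub_le (hs n) (∑ i, t i • e n i)
    rw [← charFun_map_toLp_mul_inner, charFun_stdGaussian,
      norm_sum_smul_eq_norm_of_orthonormal (he n)] at h
    simpa [charFun_stdGaussian] using h

variable {u v : ∀ n, E n}

theorem tendstoInDistribution_prodMk_sqrt_finrank_mul_inner
    (hE : Tendsto (fun n => Module.finrank ℝ (E n)) atTop atTop)
    (hν : ∀ n, IsRotationInvariant (ν n)) (hs : ∀ n, ∀ᵐ s ∂(ν n), ‖s‖ = 1)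
    (hu : ∀ n, ‖u n‖ = 1) (hv : ∀ n, ‖v n‖ = 1) (huv : ∀ n, ⟪u n, v n⟫ = 0) :
    TendstoInDistribution
      (fun n s => (√(Module.finrank ℝ (E n)) * ⟪s, u n⟫, √(Module.finrank ℝ (E n)) * ⟪s, v n⟫))
      atTop id ν ((gaussianReal 0 1).prod (gaussianReal 0 1)) := by
  have h := (tendstoInDistribution_sqrt_finrank_mul_inner hE hν hs (e := fun n => ![u n, v n])
    fun n => by simp [orthonormal_vecCons_iff, hu, hv, huv]).continuous_comp
    (g := fun x => (x 0, x 1)) (by fun_prop)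
  refine ⟨fun n => by fun_prop, by fun_prop, ?_⟩
  simpa [Function.comp_def, map_prodMk_stdGaussian_finTwo] using h.tendsto

theorem stmt12_general (hE : Tendsto (fun n => Module.finrank ℝ (E n)) atTop atTop)
    (hν : ∀ n, IsRotationInvariant (ν n)) (hs : ∀ n, ∀ᵐ s ∂(ν n), ‖s‖ = 1)
    (hu : ∀ n, ‖u n‖ = 1) (hv : ∀ n, ‖v n‖ = 1) (huv : ∀ n, ⟪u n, v n⟫ = 0)
    (f : BoundedContinuousFunction (ℝ × ℝ) ℝ) :
    Tendsto
      (fun n => ∫ s,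
        f (√(Module.finrank ℝ (E n)) * ⟪s, u n⟫, √(Module.finrank ℝ (E n)) * ⟪s, v n⟫)
        ∂(ν n)[|{x | 0 ≤ ⟪x, u n⟫}])
      atTop
      (𝓝 (∫ p, f p ∂(((gaussianReal 0 1).map (fun x => |x|)).prod (gaussianReal 0 1)))) := by
  let X (n : ℕ) (s : E n) : ℝ × ℝ :=
    (√(Module.finrank ℝ (E n)) * ⟪s, u n⟫, √(Module.finrank ℝ (E n)) * ⟪s, v n⟫)
  have hX (n : ℕ) : Measurable (X n) := by fun_prop
  let S : Set (ℝ × ℝ) := Set.Ici 0 ×ˢ Set.univ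
  have hS : MeasurableSet S := measurableSet_Ici.prod .univ
  have hatom := nullSingletonClass_gaussianReal (μ := 0) (v := 1) one_ne_zero
  have hsymm : (gaussianReal 0 1).map Neg.neg = gaussianReal 0 1 := by
    simpa using gaussianReal_map_neg (μ := 0) (v := 1)
  have hpre (n : ℕ) : X n ⁻¹' S = {x | 0 ≤ ⟪x, u n⟫} := by
    have := nontrivial_of_ae_norm_eq_one (hs n)
    have hd : 0 < √(Module.finrank ℝ (E n) : ℝ) := by simp [Module.finrank_pos]
    ext s
    simp [X, S, mul_nonneg_iff_of_pos_left hd]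
  have hlim := tendsto_integral_cond
    (tendstoInDistribution_prodMk_sqrt_finrank_mul_inner hE hν hs hu hv huv).tendsto hS
    (by simp [S, frontier_prod_univ_eq, Measure.prod_prod])
    (by simp [S, Measure.prod_prod, measure_Ici_zero_eq_inv_two hsymm]) f
  simp only [ProbabilityMeasure.coe_mk, Measure.map_id] at hlim
  rw [cond_prod_univ, cond_Ici_zero_eq_map_abs hsymm] at hlim
  refine hlim.congr fun n => ?_
  rw [cond_map (hX n) hS, hpre, integral_map (hX n).aemeasurable (by fun_prop)]

end HighDimension

lemma IsUniformSphere.ae_norm_eq_s12 {n : ℕ} {r : ℝ} {ν : Measure (EuclideanSpace ℝ (Fin n))}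
    (h : IsUniformSphere n r ν) : ∀ᵐ s ∂ν, ‖s‖ = r := by
  rw [ae_iff]
  convert h.2.1 using 2
  ext s
  simp

/-- If for each `n ≥ 2`, `u n` and `v n` are orthonormal vectors in `ℝⁿ` and `s_n` is
uniformly distributed on the hemisphere `{s ∈ S^{n-1} : ⟨s, u n⟩ ≥ 0}`, then the pair
`(√n ⟨s_n, u n⟩, √n ⟨s_n, v n⟩)` converges in distribution to `(|N₁|, N₂)` with `N₁, N₂`
independent standard normals: expectations of bounded continuous functions converge. -/
theorem stmt12 (u v : (n : ℕ) → EuclideanSpace ℝ (Fin n))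
    (hu : ∀ n, 2 ≤ n → ‖u n‖ = 1) (hv : ∀ n, 2 ≤ n → ‖v n‖ = 1)
    (huv : ∀ n, 2 ≤ n → ⟪u n, v n⟫ = 0)
    (μ : (n : ℕ) → Measure (EuclideanSpace ℝ (Fin n)))
    (hμ : ∀ n, 2 ≤ n → IsUniformHemisphere n 1 (u n) (μ n)) :
    ∀ f : BoundedContinuousFunction (ℝ × ℝ) ℝ,
      Tendsto
        (fun n : ℕ => ∫ s, f (Real.sqrt n * ⟪s, u n⟫, Real.sqrt n * ⟪s, v n⟫) ∂(μ n))
        atTop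
        (𝓝 (∫ p, f p ∂(((gaussianReal 0 1).map (fun x : ℝ => |x|)).prod
          (gaussianReal 0 1)))) := by
  intro f
  rw [← tendsto_add_atTop_iff_nat 2]
  have h2 (n : ℕ) : 2 ≤ n + 2 := Nat.le_add_left 2 n
  choose ν hν hμν using fun n => hμ (n + 2) (h2 n)
  have hprob (n : ℕ) : IsProbabilityMeasure (ν n) := (hν n).1
  simpa [hμν] using stmt12_general (E := fun n => EuclideanSpace ℝ (Fin (n + 2)))
    (by simpa using tendsto_add_atTop_nat 2) (fun n => (hν n).2.2) (fun n => (hν n).ae_norm_eq_s12)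
    (fun n => hu _ (h2 n)) (fun n => hv _ (h2 n)) (fun n => huv _ (h2 n)) f
end
end

section
/- Let N₁ and N₂ be independent standard normal random variables and let c ∈ [0, 1). Then P[c·|N₁| + √(1 - c²)·N₂ ≥ 0] = 1/2 + (1/π)·arcsin(c). -/
open MeasureTheory ProbabilityTheory

noncomputable section

/-!
Folding the plane along the second axis turns `|N₁|` into `N₁` conditioned to be positive. With
`c = sin a`, the event becomes the sector of the open right half-plane consisting of the angles
`θ` with `sin (a + θ) ≥ 0`, that is `-a ≤ θ < π / 2`. The standard Gaussian measure of the plane is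
rotation invariant, so it gives this sector the mass `(π / 2 + a) / (2 * π)`; unfolding doubles it.
-/

open Real Set
open scoped ENNReal

section Cone

/-- A set stable under multiplication by positive scalars. Neither convexity nor `0 ∈ S` is
required, so that half-open planar sectors and the whole plane qualify. -/
def IsCone {E : Type*} [SMul ℝ E] (S : Set E) : Prop :=
  ∀ ⦃r : ℝ⦄, 0 < r → ∀ ⦃p : E⦄, p ∈ S → r • p ∈ S

lemma isCone_univ {E : Type*} [SMul ℝ E] : IsCone (univ : Set E) :=
  fun _ _ _ _ ↦ mem_univ _

lemma IsCone.smul_mem_iff {E : Type*} [MulAction ℝ E] {S : Set E} (hS : IsCone S) {r : ℝ}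
    (hr : 0 < r) {p : E} : r • p ∈ S ↔ p ∈ S :=
  ⟨fun h ↦ inv_smul_smul₀ hr.ne' p ▸ hS (inv_pos.2 hr) h, fun h ↦ hS hr h⟩

/-- The angles at which a planar set meets the unit circle. They range over `(-π, π)`, the angular
domain of `polarCoord`, so the angle `π` is left out. -/
def angleSet (S : Set (ℝ × ℝ)) : Set ℝ :=
  Ioo (-π) π ∩ {θ | (cos θ, sin θ) ∈ S}

lemma volume_angleSet_univ : volume (angleSet univ) = ENNReal.ofReal (2 * π) := by
  have : angleSet univ = Ioo (-π) π := inter_univ _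
  rw [this, volume_Ioo, sub_neg_eq_add, two_mul]

variable {S : Set (ℝ × ℝ)} {f : ℝ → ℝ≥0∞}

lemma IsCone.setLIntegral_radial (hS : IsCone S) (hSm : MeasurableSet S) (hf : Measurable f) :
    ∫⁻ p in S, f (p.1 ^ 2 + p.2 ^ 2) =
      (∫⁻ r in Ioi 0, ENNReal.ofReal r * f (r ^ 2)) * volume (angleSet S) := by
  let A : Set ℝ := {θ | (cos θ, sin θ) ∈ S}
  have hA : MeasurableSet A := (by fun_prop : Measurable fun θ : ℝ ↦ (cos θ, sin θ)) hSm
  have hpolar : ∀ q ∈ polarCoord.target,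
      ENNReal.ofReal q.1 • S.indicator (fun p ↦ f (p.1 ^ 2 + p.2 ^ 2)) (polarCoord.symm q) =
        ENNReal.ofReal q.1 * f (q.1 ^ 2) * A.indicator 1 q.2 := by
    rintro ⟨r, θ⟩ ⟨hr, -⟩
    have hmem : (r * cos θ, r * sin θ) ∈ S ↔ θ ∈ A := hS.smul_mem_iff (p := (cos θ, sin θ)) hr
    have hnorm : (r * cos θ) ^ 2 + (r * sin θ) ^ 2 = r ^ 2 := by
      linear_combination r ^ 2 * sin_sq_add_cos_sq θ
    by_cases hθ : θ ∈ A <;> simp [indicator, hmem, hθ, hnorm]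
  calc ∫⁻ p in S, f (p.1 ^ 2 + p.2 ^ 2)
      = ∫⁻ q in polarCoord.target, ENNReal.ofReal q.1 * f (q.1 ^ 2) * A.indicator 1 q.2 := by
        rw [← lintegral_indicator hSm, ← lintegral_comp_polarCoord_symm]
        exact setLIntegral_congr_fun polarCoord.open_target.measurableSet hpolar
    _ = (∫⁻ r in Ioi 0, ENNReal.ofReal r * f (r ^ 2)) * ∫⁻ θ in Ioo (-π) π, A.indicator 1 θ := by
        rw [polarCoord_target, Measure.volume_eq_prod, ← Measure.prod_restrict,
          lintegral_prod_mul (f := fun r ↦ ENNReal.ofReal r * f (r ^ 2)) (by fun_prop)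
            (measurable_one.indicator hA).aemeasurable]
    _ = (∫⁻ r in Ioi 0, ENNReal.ofReal r * f (r ^ 2)) * volume (angleSet S) := by
        rw [lintegral_indicator_one hA, Measure.restrict_apply hA, inter_comm, angleSet]

lemma IsCone.withDensity_radial_apply (hS : IsCone S) (hSm : MeasurableSet S) (hf : Measurable f) :
    volume.withDensity (fun p : ℝ × ℝ ↦ f (p.1 ^ 2 + p.2 ^ 2)) S =
      volume.withDensity (fun p : ℝ × ℝ ↦ f (p.1 ^ 2 + p.2 ^ 2)) univ *
        (volume (angleSet S) / ENNReal.ofReal (2 * π)) := by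
  have hpi : ENNReal.ofReal (2 * π) ≠ 0 := by simp [pi_pos]
  rw [withDensity_apply _ hSm, withDensity_apply _ MeasurableSet.univ,
    hS.setLIntegral_radial hSm hf, isCone_univ.setLIntegral_radial MeasurableSet.univ hf,
    volume_angleSet_univ, mul_assoc, ENNReal.mul_div_cancel hpi ENNReal.ofReal_ne_top]

end Cone

section Gaussian

lemma gaussianReal_prod_gaussianReal_eq_withDensity :
    (gaussianReal 0 1).prod (gaussianReal 0 1) =
      volume.withDensity
        (fun p : ℝ × ℝ ↦ ENNReal.ofReal ((2 * π)⁻¹ * exp (-(p.1 ^ 2 + p.2 ^ 2) / 2))) := by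
  have hpdf (x y : ℝ) : gaussianPDFReal 0 1 x * gaussianPDFReal 0 1 y =
      (2 * π)⁻¹ * exp (-(x ^ 2 + y ^ 2) / 2) := by
    simp only [gaussianPDFReal_def, NNReal.coe_one, mul_one, sub_zero]
    rw [mul_mul_mul_comm, ← mul_inv, mul_self_sqrt (by positivity), ← exp_add, ← add_div, neg_add]
  rw [gaussianReal_of_var_ne_zero _ one_ne_zero,
    prod_withDensity (measurable_gaussianPDF 0 1) (measurable_gaussianPDF 0 1)]
  simp only [gaussianPDF_def, ← ENNReal.ofReal_mul (gaussianPDFReal_nonneg 0 1 _), hpdf]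
  rfl

lemma IsCone.gaussianReal_prod_gaussianReal_apply {S : Set (ℝ × ℝ)} (hS : IsCone S)
    (hSm : MeasurableSet S) :
    (gaussianReal 0 1).prod (gaussianReal 0 1) S =
      volume (angleSet S) / ENNReal.ofReal (2 * π) := by
  have h := hS.withDensity_radial_apply hSm
    (f := fun s ↦ ENNReal.ofReal ((2 * π)⁻¹ * exp (-s / 2))) (by fun_prop)
  rwa [← gaussianReal_prod_gaussianReal_eq_withDensity, measure_univ, one_mul] at h

instance isNegInvariant_gaussianReal_zero (v : NNReal) : (gaussianReal 0 v).IsNegInvariant where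
  neg_eq_self := gaussianReal_map_neg.trans (by rw [neg_zero])

end Gaussian

section Sector

/-- The sector of the open right half-plane formed by the directions of angle at least `-a`,
meant for `-π / 2 ≤ a ≤ π / 2`; it is empty for `a = -π / 2`. -/
def rightSector (a : ℝ) : Set (ℝ × ℝ) :=
  {p | 0 < p.1 ∧ 0 ≤ sin a * p.1 + cos a * p.2}

lemma measurableSet_rightSector (a : ℝ) : MeasurableSet (rightSector a) := by
  have hpos : MeasurableSet {p : ℝ × ℝ | 0 < p.1} :=
    measurableSet_lt (by fun_prop) (by fun_prop)
  have hnonneg : MeasurableSet {p : ℝ × ℝ | 0 ≤ sin a * p.1 + cos a * p.2} :=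
    measurableSet_le (by fun_prop) (by fun_prop)
  exact hpos.inter hnonneg

lemma isCone_rightSector (a : ℝ) : IsCone (rightSector a) := by
  rintro r hr ⟨x, y⟩ ⟨hx, hxy⟩
  refine ⟨mul_pos hr hx, ?_⟩
  calc 0 ≤ r * (sin a * x + cos a * y) := mul_nonneg hr.le hxy
    _ = sin a * (r * x) + cos a * (r * y) := by ring

lemma cos_pos_iff_of_mem_Ioo {θ : ℝ} (hθ : θ ∈ Ioo (-π) π) :
    0 < cos θ ↔ θ ∈ Ioo (-(π / 2)) (π / 2) := by
  refine ⟨fun h ↦ abs_lt.1 ?_, cos_pos_of_mem_Ioo⟩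
  by_contra! hle
  have hcos := cos_nonpos_of_pi_div_two_le_of_le hle (by linarith [abs_lt.2 hθ, pi_pos])
  exact (cos_abs θ ▸ hcos).not_gt h

lemma sin_nonneg_iff_of_mem_Ioo {θ : ℝ} (hθ : θ ∈ Ioo (-π) π) : 0 ≤ sin θ ↔ 0 ≤ θ := by
  refine ⟨fun h ↦ ?_, fun h ↦ sin_nonneg_of_nonneg_of_le_pi h hθ.2.le⟩
  by_contra! hlt
  exact (sin_neg_of_neg_of_neg_pi_lt hlt hθ.1).not_ge h

variable {a : ℝ}

lemma angleSet_rightSector (ha : a ∈ Icc (-(π / 2)) (π / 2)) :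
    angleSet (rightSector a) = Ioo (-(π / 2)) (π / 2) ∩ Ici (-a) := by
  have hsub : Ioo (-(π / 2)) (π / 2) ⊆ Ioo (-π) π :=
    Ioo_subset_Ioo (by linarith [pi_pos]) (by linarith [pi_pos])
  have hsin {θ : ℝ} (hθ : θ ∈ Ioo (-(π / 2)) (π / 2)) :
      0 ≤ sin a * cos θ + cos a * sin θ ↔ -a ≤ θ := by
    rw [← sin_add, sin_nonneg_iff_of_mem_Ioo
      ⟨by linarith [ha.1, hθ.1], by linarith [ha.2, hθ.2]⟩, neg_le_iff_add_nonneg']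
  ext θ
  constructor
  · rintro ⟨hθ, hcos, hle⟩
    have hθ' := (cos_pos_iff_of_mem_Ioo hθ).1 hcos
    exact ⟨hθ', (hsin hθ').1 hle⟩
  · rintro ⟨hθ, hle⟩
    exact ⟨hsub hθ, cos_pos_of_mem_Ioo hθ, (hsin hθ).2 hle⟩

lemma volume_angleSet_rightSector (ha : a ∈ Icc (-(π / 2)) (π / 2)) :
    volume (angleSet (rightSector a)) = ENNReal.ofReal (π / 2 + a) := by
  rw [angleSet_rightSector ha, measure_congr ((ae_eq_refl _).inter Ioi_ae_eq_Ici.symm),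
    Ioo_inter_Ioi, max_eq_right (neg_le_neg ha.2), volume_Ioo, sub_neg_eq_add]

lemma gaussianReal_prod_gaussianReal_rightSector (ha : a ∈ Icc (-(π / 2)) (π / 2)) :
    (gaussianReal 0 1).prod (gaussianReal 0 1) (rightSector a) =
      ENNReal.ofReal ((π / 2 + a) / (2 * π)) := by
  rw [(isCone_rightSector a).gaussianReal_prod_gaussianReal_apply (measurableSet_rightSector a),
    volume_angleSet_rightSector ha, ← ENNReal.ofReal_div_of_pos (by positivity)]

end Sector

section Folding

variable {G : Type*} [AddCommGroup G] [LinearOrder G] [IsOrderedAddMonoid G] [TopologicalSpace G]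
  [OrderTopology G] [MeasurableSpace G] [BorelSpace G]
  {μ : Measure G} [μ.IsNegInvariant] [NullSingletonClass μ]

lemma map_abs_eq_two_smul_restrict_Ioi : μ.map abs = (2 : ℝ≥0∞) • μ.restrict (Ioi 0) := by
  have habs : Measurable (abs : G → G) := continuous_abs.measurable
  ext s hs
  have hpos : abs ⁻¹' s ∩ Ioi 0 = s ∩ Ioi 0 := by
    ext x
    simp +contextual [abs_of_pos]
  have hneg : (abs ⁻¹' s \ Ioi 0 : Set G) =ᵐ[μ] -(s ∩ Ioi 0) := by
    refine Filter.eventuallyEq_set.2 ?_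
    filter_upwards [μ.ae_ne 0] with x hx
    rcases hx.lt_or_gt with hlt | hgt
    · simp [hlt.not_gt, hlt, abs_of_neg]
    · simp [hgt.not_gt, hgt]
  rw [Measure.map_apply habs hs, ← measure_inter_add_sdiff _ measurableSet_Ioi, hpos,
    measure_congr hneg, Measure.measure_neg, Measure.smul_apply, Measure.restrict_apply hs,
    smul_eq_mul, two_mul]

lemma map_prodMap_abs_id_eq_two_smul_restrict {β : Type*} [MeasurableSpace β] (ν : Measure β)
    [SFinite μ] [SFinite ν] :
    (μ.prod ν).map (Prod.map abs id) =
      (2 : ℝ≥0∞) • (μ.prod ν).restrict (Ioi 0 ×ˢ univ) := by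
  rw [← Measure.map_prod_map _ _ continuous_abs.measurable measurable_id,
    map_abs_eq_two_smul_restrict_Ioi, Measure.map_id, Measure.prod_smul_left,
    Measure.restrict_prod_eq_prod_univ]

end Folding

theorem stmt13_general (c : ℝ) (hc : c ∈ Icc (-1 : ℝ) 1) :
    ((gaussianReal 0 1).prod (gaussianReal 0 1))
      {p : ℝ × ℝ | 0 ≤ c * |p.1| + √(1 - c ^ 2) * p.2} =
    ENNReal.ofReal (1 / 2 + (1 / π) * arcsin c) := by
  have := nullSingletonClass_gaussianReal (μ := 0) (one_ne_zero (α := NNReal))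
  let H : Set (ℝ × ℝ) := {p | 0 ≤ c * p.1 + √(1 - c ^ 2) * p.2}
  have hH : MeasurableSet H := measurableSet_le (by fun_prop) (by fun_prop)
  have hsector : H ∩ Ioi 0 ×ˢ univ = rightSector (arcsin c) := by
    ext p
    simp [H, rightSector, sin_arcsin hc.1 hc.2, cos_arcsin, and_comm]
  calc (gaussianReal 0 1).prod (gaussianReal 0 1) {p | 0 ≤ c * |p.1| + √(1 - c ^ 2) * p.2}
      = ((gaussianReal 0 1).prod (gaussianReal 0 1)).map (Prod.map abs id) H :=
        (Measure.map_apply (continuous_abs.measurable.prodMap measurable_id) hH).symm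
    _ = 2 * (gaussianReal 0 1).prod (gaussianReal 0 1) (rightSector (arcsin c)) := by
        rw [map_prodMap_abs_id_eq_two_smul_restrict, Measure.smul_apply,
          Measure.restrict_apply hH, hsector, smul_eq_mul]
    _ = ENNReal.ofReal (2 * ((π / 2 + arcsin c) / (2 * π))) := by
        rw [gaussianReal_prod_gaussianReal_rightSector (arcsin_mem_Icc c),
          ENNReal.ofReal_mul zero_le_two, ENNReal.ofReal_ofNat]
    _ = ENNReal.ofReal (1 / 2 + (1 / π) * arcsin c) := by
        congr 1
        field_simp

/-- If `N₁, N₂` are independent standard normal random variables and `c ∈ [0, 1)`, then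
`P[c|N₁| + √(1-c²) N₂ ≥ 0] = 1/2 + (1/π) arcsin c`. The pair `(N₁, N₂)` is modeled by the
product of two standard real Gaussian measures. -/
theorem stmt13 (c : ℝ) (hc : c ∈ Set.Ico (0 : ℝ) 1) :
    ((gaussianReal 0 1).prod (gaussianReal 0 1))
      {p : ℝ × ℝ | 0 ≤ c * |p.1| + Real.sqrt (1 - c ^ 2) * p.2} =
    ENNReal.ofReal (1 / 2 + (1 / Real.pi) * Real.arcsin c) :=
  stmt13_general c ⟨by linarith [hc.1], hc.2.le⟩
end
end
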